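/- Let ζ = (−1)^{p−1} 2p ([p−1]!)² and let μ : Ū_q → ℂ be the linear form determined on the PBW basis by μ(F^m E^n K^j) = ζ if (m, n, j) = (p−1, p−1, p+1) and 0 otherwise (0 ≤ m, n ≤ p−1, 0 ≤ j ≤ 2p−1); μ is a right integral of Ū_q. Then the symmetric linear form u ↦ μ(K^{p+1} u) has the following expansion in the GTA basis: μ(K^{p+1}·) = (−1)^{p−1} χ^+_p + χ^−_p + Σ_{s=1}^{p−1} [ (−1)^s (q^s + q^{−s}) χ^+_s + (−1)^{p−s−1} (q^s + q^{−s}) χ^−_s + (−1)^s [s]² G_s ]. -/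

import Mathlib

noncomputable section

open scoped TensorProduct

namespace Uqsl2

/-- Generators of the restricted quantum group. -/
inductive gen : Type | E | F | K | Kinv

/-- The primitive `2p`-th root of unity `q = e^{iπ/p}`. -/
def q (p : ℕ) : ℂ := Complex.exp (Real.pi * Complex.I / p)

/-- The `q`-integer `[n] = (q^n - q^{-n})/(q - q^{-1})`. -/
def qi (p : ℕ) (n : ℤ) : ℂ := (q p ^ n - q p ^ (-n)) / (q p - (q p)⁻¹)

/-- The `q`-factorial `[m]!`. -/
def qfact (p m : ℕ) : ℂ := ∏ i ∈ Finset.range m, qi p (i + 1)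

open FreeAlgebra in
/-- The defining relations of `Ū_q(sl₂)`. -/
inductive rel (p : ℕ) : FreeAlgebra ℂ gen → FreeAlgebra ℂ gen → Prop
  | KKinv : rel p (ι ℂ gen.K * ι ℂ gen.Kinv) 1
  | KinvK : rel p (ι ℂ gen.Kinv * ι ℂ gen.K) 1
  | Ep : rel p (ι ℂ gen.E ^ p) 0
  | Fp : rel p (ι ℂ gen.F ^ p) 0
  | K2p : rel p (ι ℂ gen.K ^ (2 * p)) 1
  | KE : rel p (ι ℂ gen.K * ι ℂ gen.E) (q p ^ 2 • (ι ℂ gen.E * ι ℂ gen.K))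
  | KF : rel p (ι ℂ gen.K * ι ℂ gen.F) ((q p ^ 2)⁻¹ • (ι ℂ gen.F * ι ℂ gen.K))
  | EF : rel p (ι ℂ gen.E * ι ℂ gen.F - ι ℂ gen.F * ι ℂ gen.E)
             ((q p - (q p)⁻¹)⁻¹ • (ι ℂ gen.K - ι ℂ gen.Kinv))

/-- The restricted quantum group `Ū_q(sl₂)`, presented by generators and relations. -/
abbrev Uq (p : ℕ) := RingQuot (rel p)

def EE (p : ℕ) : Uq p := RingQuot.mkAlgHom ℂ (rel p) (FreeAlgebra.ι ℂ gen.E)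
def FF (p : ℕ) : Uq p := RingQuot.mkAlgHom ℂ (rel p) (FreeAlgebra.ι ℂ gen.F)
def KK (p : ℕ) : Uq p := RingQuot.mkAlgHom ℂ (rel p) (FreeAlgebra.ι ℂ gen.K)
def KKinv (p : ℕ) : Uq p := RingQuot.mkAlgHom ℂ (rel p) (FreeAlgebra.ι ℂ gen.Kinv)

/-! ### The simple modules `X^α(s)` as matrix representations -/

/-- Matrix of `K` on `X^α(s)` in the canonical basis. -/
def XK (p : ℕ) (α : ℂ) (s : ℕ) : Matrix (Fin s) (Fin s) ℂ :=
  Matrix.diagonal fun i => α * q p ^ ((s : ℤ) - 1 - 2 * (i : ℕ))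

/-- Matrix of `E` on `X^α(s)` in the canonical basis. -/
def XE (p : ℕ) (α : ℂ) (s : ℕ) : Matrix (Fin s) (Fin s) ℂ :=
  Matrix.of fun i j =>
    if (i : ℕ) + 1 = (j : ℕ) then α * qi p (j : ℕ) * qi p ((s : ℤ) - (j : ℕ)) else 0

/-- Matrix of `F` on `X^α(s)` in the canonical basis. -/
def XF (s : ℕ) : Matrix (Fin s) (Fin s) ℂ :=
  Matrix.of fun i j => if (i : ℕ) = (j : ℕ) + 1 then (1 : ℂ) else 0

/-- The statement that `ρX α s` is the representation on `X^α(s)` for the relevant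
values of `α` and `s`. -/
def IsXRep (p : ℕ) (ρX : (α : ℂ) → (s : ℕ) → (Uq p →ₐ[ℂ] Matrix (Fin s) (Fin s) ℂ)) : Prop :=
  ∀ α : ℂ, (α = 1 ∨ α = -1) → ∀ s : ℕ, 1 ≤ s → s ≤ p →
    ρX α s (KK p) = XK p α s ∧ ρX α s (EE p) = XE p α s ∧ ρX α s (FF p) = XF s

/-! ### The projective modules `P^α(s)` as matrix representations -/

/-- Index for the standard basis `(b_i, x_j, y_k, a_l)` of `P^α(s)`. -/
abbrev PIdx (p s : ℕ) := Fin s ⊕ (Fin (p - s) ⊕ (Fin (p - s) ⊕ Fin s))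

/-- Diagonal of the matrix of `K` on `P^α(s)`. -/
def PKdiag (p : ℕ) (α : ℂ) (s : ℕ) : PIdx p s → ℂ
  | .inl i => α * q p ^ ((s : ℤ) - 1 - 2 * (i : ℕ))
  | .inr (.inl j) => -α * q p ^ ((p : ℤ) - s - 1 - 2 * (j : ℕ))
  | .inr (.inr (.inl k)) => -α * q p ^ ((p : ℤ) - s - 1 - 2 * (k : ℕ))
  | .inr (.inr (.inr l)) => α * q p ^ ((s : ℤ) - 1 - 2 * (l : ℕ))

/-- Matrix of `K` on `P^α(s)` in the standard basis. -/
def PK (p : ℕ) (α : ℂ) (s : ℕ) : Matrix (PIdx p s) (PIdx p s) ℂ :=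
  Matrix.diagonal (PKdiag p α s)

/-- Matrix of `E` on `P^α(s)` in the standard basis. -/
def PE (p : ℕ) (α : ℂ) (s : ℕ) : Matrix (PIdx p s) (PIdx p s) ℂ :=
  Matrix.of fun i j =>
    match i, j with
    | .inl i, .inl j =>
        if (i : ℕ) + 1 = (j : ℕ) then α * qi p (j : ℕ) * qi p ((s : ℤ) - (j : ℕ)) else 0
    | .inr (.inl jx), .inl j => if (j : ℕ) = 0 ∧ (jx : ℕ) + 1 = p - s then 1 else 0
    | .inr (.inr (.inr l)), .inl j => if (l : ℕ) + 1 = (j : ℕ) then 1 else 0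
    | .inr (.inl i), .inr (.inl j) =>
        if (i : ℕ) + 1 = (j : ℕ) then -α * qi p (j : ℕ) * qi p ((p : ℤ) - s - (j : ℕ)) else 0
    | .inr (.inr (.inl i)), .inr (.inr (.inl k)) =>
        if (i : ℕ) + 1 = (k : ℕ) then -α * qi p (k : ℕ) * qi p ((p : ℤ) - s - (k : ℕ)) else 0
    | .inr (.inr (.inr l)), .inr (.inr (.inl k)) =>
        if (k : ℕ) = 0 ∧ (l : ℕ) + 1 = s then 1 else 0
    | .inr (.inr (.inr i)), .inr (.inr (.inr l)) =>
        if (i : ℕ) + 1 = (l : ℕ) then α * qi p (l : ℕ) * qi p ((s : ℤ) - (l : ℕ)) else 0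
    | _, _ => 0

/-- Matrix of `F` on `P^α(s)` in the standard basis. -/
def PF (p s : ℕ) : Matrix (PIdx p s) (PIdx p s) ℂ :=
  Matrix.of fun i j =>
    match i, j with
    | .inl i, .inl j => if (i : ℕ) = (j : ℕ) + 1 then (1 : ℂ) else 0
    | .inr (.inr (.inl k)), .inl j => if (j : ℕ) + 1 = s ∧ (k : ℕ) = 0 then 1 else 0
    | .inr (.inl i), .inr (.inl j) => if (i : ℕ) = (j : ℕ) + 1 then 1 else 0
    | .inr (.inr (.inr l)), .inr (.inl j) => if (j : ℕ) + 1 = p - s ∧ (l : ℕ) = 0 then 1 else 0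
    | .inr (.inr (.inl i)), .inr (.inr (.inl k)) => if (i : ℕ) = (k : ℕ) + 1 then 1 else 0
    | .inr (.inr (.inr i)), .inr (.inr (.inr l)) => if (i : ℕ) = (l : ℕ) + 1 then 1 else 0
    | _, _ => 0

/-- The statement that `ρP α s` is the representation on `P^α(s)` for the relevant
values of `α` and `s`. -/
def IsPRep (p : ℕ)
    (ρP : (α : ℂ) → (s : ℕ) → (Uq p →ₐ[ℂ] Matrix (PIdx p s) (PIdx p s) ℂ)) : Prop :=
  ∀ α : ℂ, (α = 1 ∨ α = -1) → ∀ s : ℕ, 1 ≤ s → s ≤ p - 1 →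
    ρP α s (KK p) = PK p α s ∧ ρP α s (EE p) = PE p α s ∧ ρP α s (FF p) = PF p s

/-! ### Symmetric linear forms, characters, and the forms `G_s` -/

/-- Symmetric linear forms. -/
def IsSLF (p : ℕ) (φ : Uq p →ₗ[ℂ] ℂ) : Prop := ∀ x y : Uq p, φ (x * y) = φ (y * x)

/-- The character of a matrix representation. -/
def chiOf (p : ℕ) {n : Type} [Fintype n] [DecidableEq n]
    (ρ : Uq p →ₐ[ℂ] Matrix n n ℂ) : Uq p →ₗ[ℂ] ℂ :=
  (Matrix.traceLinearMap n ℂ ℂ).comp ρ.toLinearMap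

/-- The matrix entry functional. -/
def entry {n : Type} (i j : n) : Matrix n n ℂ →ₗ[ℂ] ℂ where
  toFun M := M i j
  map_add' _ _ := rfl
  map_smul' _ _ := rfl

/-- The symmetric linear form `G_s = tr H^+_s + tr H^-_{p-s}`. -/
def GOf (p : ℕ)
    (ρP : (α : ℂ) → (s : ℕ) → (Uq p →ₐ[ℂ] Matrix (PIdx p s) (PIdx p s) ℂ))
    (s : ℕ) : Uq p →ₗ[ℂ] ℂ :=
  (∑ i : Fin s,
    (entry (Sum.inr (Sum.inr (Sum.inr i))) (Sum.inl i)).comp (ρP 1 s).toLinearMap) +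
  (∑ j : Fin (p - s),
    (entry (Sum.inr (Sum.inr (Sum.inr j))) (Sum.inl j)).comp (ρP (-1) (p - s)).toLinearMap)

/-! ### Convolution product -/

/-- The convolution product of two linear forms, with respect to a comultiplication `Δ`. -/
def conv (p : ℕ) (Δ : Uq p →ₐ[ℂ] (Uq p ⊗[ℂ] Uq p)) (φ ψ : Uq p →ₗ[ℂ] ℂ) :
    Uq p →ₗ[ℂ] ℂ :=
  (LinearMap.mul' ℂ ℂ).comp ((TensorProduct.map φ ψ).comp Δ.toLinearMap)

/-- The statement that `Δ` is the comultiplication of `Ū_q(sl₂)`. -/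
def IsCoprod (p : ℕ) (Δ : Uq p →ₐ[ℂ] (Uq p ⊗[ℂ] Uq p)) : Prop :=
  Δ (EE p) = 1 ⊗ₜ[ℂ] EE p + EE p ⊗ₜ[ℂ] KK p ∧
  Δ (FF p) = FF p ⊗ₜ[ℂ] 1 + KKinv p ⊗ₜ[ℂ] FF p ∧
  Δ (KK p) = KK p ⊗ₜ[ℂ] KK p ∧
  Δ (KKinv p) = KKinv p ⊗ₜ[ℂ] KKinv p


/-! ### Scalar facts about `q` -/

lemma q_prim (p : ℕ) (hp : 2 ≤ p) : IsPrimitiveRoot (q p) (2 * p) := by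
  have h := Complex.isPrimitiveRoot_exp (2 * p) (by omega)
  have e : q p = Complex.exp (2 * Real.pi * Complex.I / ((2 * p : ℕ) : ℂ)) := by
    unfold q
    congr 1
    have : (p : ℂ) ≠ 0 := by exact_mod_cast (by omega : p ≠ 0)
    push_cast
    field_simp
  rw [e]; exact h

lemma q_ne (p : ℕ) : q p ≠ 0 := Complex.exp_ne_zero _

lemma q_pow_p (p : ℕ) (hp : 2 ≤ p) : q p ^ p = -1 := by
  have h := q_prim p hp
  have h2 : IsPrimitiveRoot (q p ^ p) 2 := h.pow (by omega) (by ring)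
  exact h2.eq_neg_one_of_two_right

lemma q_zpow_eq_one (p : ℕ) (hp : 2 ≤ p) (k : ℤ) : q p ^ k = 1 ↔ ((2 * p : ℕ) : ℤ) ∣ k :=
  (q_prim p hp).zpow_eq_one_iff_dvd k

lemma q_sub_ne (p : ℕ) (hp : 2 ≤ p) : q p - (q p)⁻¹ ≠ 0 := by
  intro h
  have h1 : q p ^ (2 : ℤ) = 1 := by
    have h0 := q_ne p
    have : q p = (q p)⁻¹ := sub_eq_zero.mp h
    rw [zpow_two]
    nth_rewrite 2 [this]
    exact mul_inv_cancel₀ h0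
  rw [q_zpow_eq_one p hp] at h1
  have := Int.le_of_dvd (by norm_num) h1
  push_cast at this
  omega

lemma root_sum {z : ℂ} {n : ℕ} (hz : IsPrimitiveRoot z n) (k : ℤ) :
    ∑ i ∈ Finset.range n, (z ^ k) ^ i = if (n : ℤ) ∣ k then (n : ℂ) else 0 := by
  split_ifs with h
  · rw [(hz.zpow_eq_one_iff_dvd k).2 h]; simp
  · have h1 : z ^ k ≠ 1 := fun e => h ((hz.zpow_eq_one_iff_dvd k).1 e)
    rw [geom_sum_eq h1]
    have : (z ^ k) ^ n = 1 := by
      rw [← zpow_natCast, ← zpow_mul, mul_comm, zpow_mul, zpow_natCast, hz.pow_eq_one, one_zpow]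
    rw [this]; simp

/-- The `q`-number numerator `q^s + q^{-s}`. -/
def zz (p : ℕ) (s : ℤ) : ℂ := q p ^ s + q p ^ (-s)

/-- `T_a(N) = ∑_s q^{as} (q^s+q^{-s})^N`. -/
def TT (p : ℕ) (a : ℤ) (N : ℕ) : ℂ :=
  ∑ s ∈ Finset.range (2 * p), q p ^ (a * s) * zz p s ^ N

lemma TT_eq (p : ℕ) (hp : 2 ≤ p) (a : ℤ) (N : ℕ) :
    TT p a N = ∑ m ∈ Finset.range (N + 1),
      (N.choose m : ℂ) * if ((2 * p : ℕ) : ℤ) ∣ (a + 2 * m - N) then ((2 * p : ℕ) : ℂ) else 0 := by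
  unfold TT zz
  simp_rw [add_pow, Finset.mul_sum]
  rw [Finset.sum_comm]
  refine Finset.sum_congr rfl fun m hm => ?_
  rw [← root_sum (q_prim p hp), Finset.mul_sum]
  refine Finset.sum_congr rfl fun s _ => ?_
  have hm' : m ≤ N := by simpa [Nat.lt_succ_iff] using hm
  have h0 := q_ne p
  rw [← zpow_natCast (q p ^ (s : ℤ)), ← zpow_natCast (q p ^ (-(s : ℤ))),
    ← zpow_natCast (q p ^ (a + 2 * m - N)), ← zpow_mul, ← zpow_mul, ← zpow_mul,
    ← mul_assoc, ← mul_assoc, ← zpow_add₀ h0, ← zpow_add₀ h0, mul_comm]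
  congr 2
  rw [Nat.cast_sub hm']
  ring

/-- `a = p` case. -/
lemma TT_p (p : ℕ) (hp : 2 ≤ p) (N : ℕ) (hN : N ≤ p) :
    TT p p N = if N = p then 4 * (p : ℂ) else 0 := by
  rw [TT_eq p hp]
  split_ifs with h
  · subst h
    rw [Finset.sum_range_succ, Finset.sum_range_eq_add_Ico _ (by omega),
      Finset.sum_eq_zero (s := Finset.Ico 1 N)]
    · have h1 : ((2 * N : ℕ) : ℤ) ∣ ((N : ℤ) + 2 * ((0 : ℕ) : ℤ) - N) := by simp
      have h2 : ((2 * N : ℕ) : ℤ) ∣ ((N : ℤ) + 2 * (N : ℤ) - N) := by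
        exact ⟨1, by push_cast; ring⟩
      rw [if_pos h1, if_pos h2]
      simp; ring
    · intro m hm
      rw [Finset.mem_Ico] at hm
      rw [if_neg, mul_zero]
      rintro ⟨k, hk⟩
      push_cast at hk
      have hNpos : (0 : ℤ) < N := by omega
      have hm1 : (m : ℤ) = N * k := by linarith
      have : 0 < k := by by_contra hk0; nlinarith
      nlinarith
  · refine Finset.sum_eq_zero fun m hm => ?_
    rw [Finset.mem_range] at hm
    rw [if_neg, mul_zero]
    rintro ⟨k, hk⟩
    push_cast at hk
    have hNlt : (N : ℤ) < p := by omega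
    have hm' : (m : ℤ) ≤ N := by omega
    have h1 : 0 < k := by by_contra hk0; nlinarith
    nlinarith

/-- `a = 0` case. -/
lemma TT_zero (p : ℕ) (hp : 2 ≤ p) (N : ℕ) (hN : N ≤ p) :
    TT p 0 N = if Even N then 2 * (p : ℂ) * (N.choose (N / 2) : ℂ) else 0 := by
  rw [TT_eq p hp]
  have key : ∀ m ∈ Finset.range (N + 1), ((2 * p : ℕ) : ℤ) ∣ (0 + 2 * (m : ℤ) - N) → 2 * m = N := by
    rintro m hm ⟨k, hk⟩
    rw [Finset.mem_range] at hm
    push_cast at hk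
    have h1 : k < 1 := by by_contra hk0; nlinarith
    have h2 : -1 < k := by by_contra hk0; nlinarith
    have : k = 0 := by omega
    subst this
    omega
  split_ifs with h
  · obtain ⟨t, rfl⟩ := h
    rw [Finset.sum_eq_single t]
    · rw [if_pos (by exact ⟨0, by push_cast; ring⟩)]
      rw [show (t + t) / 2 = t by omega]
      push_cast; ring
    · intro m hm hne
      rw [if_neg, mul_zero]
      intro hd
      have := key m hm hd
      omega
    · intro hh; exfalso; apply hh; simp
  · refine Finset.sum_eq_zero fun m hm => ?_
    rw [if_neg, mul_zero]
    intro hd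
    exact h ⟨m, by have := key m hm hd; omega⟩

lemma TT_zero_comb (p : ℕ) (hp : 2 ≤ p) (n : ℕ) (hn : n + 1 ≤ p) :
    ((n : ℂ) + 1) * TT p 0 (n + 1) - 4 * n * TT p 0 (n - 1) = 0 := by
  rw [TT_zero p hp _ hn, TT_zero p hp _ (by omega)]
  rcases Nat.even_or_odd n with h | h
  · rw [if_neg (by rw [Nat.not_even_iff_odd]; exact h.add_one)]
    rcases Nat.eq_zero_or_pos n with rfl | hpos
    · simp
    · rw [if_neg]
      · simp
      · rw [Nat.not_even_iff_odd]
        exact Nat.Even.sub_odd hpos h odd_one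
  · obtain ⟨t, rfl⟩ := h
    rw [if_pos ⟨t + 1, by ring⟩, if_pos ⟨t, by omega⟩]
    have h1 : (2 * t + 1 + 1) / 2 = t + 1 := by omega
    have h2 : (2 * t + 1 - 1) / 2 = t := by omega
    have h3 : 2 * t + 1 - 1 = 2 * t := by omega
    have h4 : 2 * t + 1 + 1 = 2 * (t + 1) := by ring
    rw [h1, h2, h3, h4]
    have hc := Nat.succ_mul_centralBinom_succ t
    unfold Nat.centralBinom at hc
    have hc' : ((t : ℂ) + 1) * ((2 * (t + 1)).choose (t + 1) : ℂ)
        = 2 * (2 * t + 1) * ((2 * t).choose t : ℂ) := by exact_mod_cast hc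
    push_cast
    linear_combination (4 * (p : ℂ)) * hc'

lemma zz_neg (p : ℕ) (s : ℤ) : zz p (-s) = zz p s := by
  unfold zz; rw [neg_neg, add_comm]

lemma q_zpow_add_period (p : ℕ) (hp : 2 ≤ p) (s k : ℤ) : q p ^ (s + 2 * p * k) = q p ^ s := by
  rw [zpow_add₀ (q_ne p), (q_zpow_eq_one p hp (2 * p * k)).2 ⟨k, by push_cast; ring⟩, mul_one]

lemma sum_symm (p : ℕ) (hp : 2 ≤ p) (g : ℕ → ℂ) (hg : ∀ s, s ≤ 2 * p → g (2 * p - s) = g s) :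
    ∑ s ∈ Finset.range (2 * p), g s = g 0 + g p + 2 * ∑ s ∈ Finset.Icc 1 (p - 1), g s := by
  have e : Finset.Icc 1 (p - 1) = Finset.Ico 1 p := by ext; simp; omega
  rw [e, Finset.range_eq_Ico, ← Finset.sum_Ico_consecutive _ (by omega : 0 ≤ p) (by omega : p ≤ 2 * p),
    Finset.sum_eq_sum_Ico_succ_bot (by omega : 0 < p),
    Finset.sum_eq_sum_Ico_succ_bot (by omega : p < 2 * p)]
  have : ∑ s ∈ Finset.Ico (p + 1) (2 * p), g s = ∑ s ∈ Finset.Ico 1 p, g s := by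
    refine Finset.sum_nbij' (fun s => 2 * p - s) (fun s => 2 * p - s) ?_ ?_ ?_ ?_ ?_
    · intro a ha; simp at ha ⊢; omega
    · intro a ha; simp at ha ⊢; omega
    · intro a ha; simp at ha ⊢; omega
    · intro a ha; simp at ha ⊢; omega
    · intro a ha; simp at ha ⊢; rw [hg]; omega
  rw [this]; simp only [zero_add]; ring

/-- The summand at `s`. -/
def dd (p : ℕ) : ℂ := (q p - (q p)⁻¹) ^ 2

/-- The Casimir eigenvalue. -/
def cc (p : ℕ) (s : ℤ) : ℂ := zz p s / dd p

lemma dd_ne (p : ℕ) (hp : 2 ≤ p) : dd p ≠ 0 := pow_ne_zero _ (q_sub_ne p hp)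

lemma qi_sq (p : ℕ) (s : ℤ) : qi p s ^ 2 = (zz p s ^ 2 - 4) / dd p := by
  unfold qi dd zz
  rw [div_pow]
  congr 1
  have : q p ^ s * q p ^ (-s) = 1 := by rw [← zpow_add₀ (q_ne p)]; simp
  linear_combination (-4) * this

lemma summand_eq (p : ℕ) (hp : 2 ≤ p) (n : ℕ) (s : ℤ) :
    zz p s * cc p s ^ n + qi p s ^ 2 * (n * cc p s ^ (n - 1))
      = ((n + 1) * zz p s ^ (n + 1) - 4 * n * zz p s ^ (n - 1)) / dd p ^ n := by
  have h := dd_ne p hp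
  rw [qi_sq]
  unfold cc
  rcases n with _ | n
  · simp
  · simp only [Nat.add_sub_cancel, div_pow]
    field_simp
    push_cast
    ring

/-- The full scalar sum. -/
lemma full_sum (p : ℕ) (hp : 2 ≤ p) (a : ℤ) (ha : q p ^ (2 * a) = 1) (n : ℕ) :
    q p ^ (a * 0) * cc p 0 ^ n - q p ^ (a * p) * cc p p ^ n
      + ∑ s ∈ Finset.Icc 1 (p - 1), q p ^ (a * s) *
        (zz p s * cc p s ^ n + qi p s ^ 2 * (n * cc p s ^ (n - 1)))
    = ((n + 1) * TT p a (n + 1) - 4 * n * TT p a (n - 1)) / (2 * dd p ^ n) := by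
  have h := dd_ne p hp
  set g : ℕ → ℂ := fun s => q p ^ (a * s) *
        (zz p s * cc p s ^ n + qi p s ^ 2 * (n * cc p s ^ (n - 1))) with hgdef
  have hsym : ∀ s, s ≤ 2 * p → g (2 * p - s) = g s := by
    intro s hs
    have h1 : ((2 * p - s : ℕ) : ℤ) = -(s : ℤ) + 2 * p * 1 := by
      rw [Nat.cast_sub hs]; push_cast; ring
    have h2 : zz p ((2 * p - s : ℕ) : ℤ) = zz p s := by
      rw [h1]; unfold zz
      rw [q_zpow_add_period p hp, show -(-(s : ℤ) + 2 * p * 1) = s + 2 * p * (-1) by ring,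
        q_zpow_add_period p hp, add_comm]
    have h3 : q p ^ (a * ((2 * p - s : ℕ) : ℤ)) = q p ^ (a * s) := by
      have h4 : a * ((2 * p - s : ℕ) : ℤ) = a * s + 2 * p * a + (2 * a) * (-s) := by rw [h1]; ring
      rw [h4, zpow_add₀ (q_ne p), q_zpow_add_period p hp, zpow_mul _ (2 * a), ha, one_zpow, mul_one]
    have h5 : qi p ((2 * p - s : ℕ) : ℤ) ^ 2 = qi p s ^ 2 := by rw [qi_sq, qi_sq, h2]
    simp only [hgdef, cc, h2, h3, h5]
  have hz0 : zz p 0 = 2 := by unfold zz; norm_num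
  have hzp : zz p p = -2 := by
    unfold zz; rw [zpow_neg, zpow_natCast, q_pow_p p hp]; norm_num
  have hg0 : g 0 = 2 * (q p ^ (a * 0) * cc p 0 ^ n) := by
    simp only [hgdef, Nat.cast_zero, qi_sq, hz0]; norm_num
  have hgp : g p = -2 * (q p ^ (a * p) * cc p p ^ n) := by
    simp only [hgdef, qi_sq, hzp]; norm_num; ring
  have hs := sum_symm p hp g hsym
  have hT : ∑ s ∈ Finset.range (2 * p), g s
      = ((n + 1) * TT p a (n + 1) - 4 * n * TT p a (n - 1)) / dd p ^ n := by
    unfold TT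
    rw [Finset.mul_sum, Finset.mul_sum, ← Finset.sum_sub_distrib, Finset.sum_div]
    refine Finset.sum_congr rfl fun s _ => ?_
    simp only [hgdef]
    rw [summand_eq p hp]
    ring
  rw [hT, hg0, hgp] at hs
  have : ((n + 1) * TT p a (n + 1) - 4 * n * TT p a (n - 1)) / (2 * dd p ^ n)
      = (((n + 1) * TT p a (n + 1) - 4 * n * TT p a (n - 1)) / dd p ^ n) / 2 := by
    rw [div_div, mul_comm (dd p ^ n)]
  rw [this, hs]
  ring

lemma full_sum_zero (p : ℕ) (hp : 2 ≤ p) (n : ℕ) (hn : n ≤ p - 1) :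
    cc p 0 ^ n - cc p p ^ n
      + ∑ s ∈ Finset.Icc 1 (p - 1),
        (zz p s * cc p s ^ n + qi p s ^ 2 * (n * cc p s ^ (n - 1))) = 0 := by
  have := full_sum p hp 0 (by simp) n
  rw [TT_zero_comb p hp n (by omega)] at this
  simpa using this

lemma q_p_mul (p : ℕ) (hp : 2 ≤ p) (s : ℕ) : q p ^ ((p : ℤ) * s) = (-1) ^ s := by
  rw [zpow_mul, zpow_natCast, zpow_natCast, q_pow_p p hp]

lemma prod_q (p : ℕ) (hp : 2 ≤ p) :
    (p : ℂ) ^ 2 = (-1) ^ (p - 1) * qfact p (p - 1) ^ 2 * dd p ^ (p - 1) := by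
  obtain ⟨n, rfl⟩ : ∃ n, p = n + 1 := ⟨p - 1, by omega⟩
  have h2 : IsPrimitiveRoot (q (n + 1) ^ 2) (n + 1) := (q_prim (n + 1) hp).pow (by omega) (by ring)
  have h := h2.prod_one_sub_pow_eq_order
  have hne := q_sub_ne (n + 1) hp
  simp only [Nat.add_sub_cancel]
  have e1 : qfact (n + 1) n ^ 2 * dd (n + 1) ^ n
      = ∏ k ∈ Finset.range n, ((1 - (q (n + 1) ^ 2) ^ (k + 1)) ^ 2 * (q (n + 1) ^ (2 * (k + 1)))⁻¹) := by
    unfold qfact dd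
    rw [← Finset.prod_pow, ← Finset.card_range n, ← Finset.prod_const, Finset.card_range,
      ← Finset.prod_mul_distrib]
    refine Finset.prod_congr rfl fun k _ => ?_
    unfold qi
    rw [div_pow, div_mul_cancel₀ _ (pow_ne_zero 2 hne)]
    have h0 := q_ne (n + 1)
    rw [zpow_neg]
    have : q (n + 1) ^ ((k : ℤ) + 1) = q (n + 1) ^ (k + 1) := by
      rw [← zpow_natCast]; push_cast; rfl
    rw [this, ← pow_mul, pow_mul']
    field_simp
    ring
  have e2 : ∏ k ∈ Finset.range n, (q (n + 1) ^ (2 * (k + 1)))⁻¹ = (-1 : ℂ) ^ n := by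
    rw [Finset.prod_inv_distrib, Finset.prod_pow_eq_pow_sum, ← Finset.mul_sum]
    have : 2 * ∑ k ∈ Finset.range n, (k + 1) = (n + 1) * n := by
      have := Finset.sum_range_id_mul_two (n + 1)
      rw [Finset.sum_range_succ'] at this
      simp only [add_zero, Nat.add_sub_cancel] at this
      rw [mul_comm, this]
    rw [this, pow_mul, q_pow_p (n + 1) hp]
    rcases neg_one_pow_eq_or ℂ n with h | h <;> rw [h] <;> norm_num
  rw [mul_assoc, e1, Finset.prod_mul_distrib, e2, Finset.prod_pow, h]
  push_cast
  rcases neg_one_pow_eq_or ℂ n with h | h <;> rw [h] <;> ring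

lemma full_sum_p (p : ℕ) (hp : 2 ≤ p) (n : ℕ) (hn : n ≤ p - 1) :
    cc p 0 ^ n - (-1) ^ p * cc p p ^ n
      + ∑ s ∈ Finset.Icc 1 (p - 1), (-1) ^ s *
        (zz p s * cc p s ^ n + qi p s ^ 2 * (n * cc p s ^ (n - 1)))
      = if n = p - 1 then (-1) ^ (p - 1) * 2 * qfact p (p - 1) ^ 2 else 0 := by
  have := full_sum p hp p (by
    rw [q_zpow_eq_one p hp]; exact ⟨1, by push_cast; ring⟩) n
  simp only [q_p_mul p hp, mul_zero, zpow_zero, one_mul] at this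
  rw [this, TT_p p hp _ (by omega), TT_p p hp _ (by omega)]
  have hd := dd_ne p hp
  by_cases h : n = p - 1
  · rw [if_pos (by omega), if_neg (by omega), if_pos h]
    have h2 := prod_q p hp
    have hn1 : (n : ℂ) + 1 = p := by
      have : n + 1 = p := by omega
      exact_mod_cast this
    rw [hn1, h, div_eq_iff (mul_ne_zero two_ne_zero (pow_ne_zero _ hd))]
    linear_combination 4 * h2
  · rw [if_neg (by omega), if_neg (by omega), if_neg h]; simp

/-! ### Relations in `Ū_q` -/

lemma r_KKinv (p : ℕ) : KK p * KKinv p = 1 := by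
  have := RingQuot.mkAlgHom_rel ℂ (rel.KKinv (p := p))
  simpa [KK, KKinv] using this

lemma r_KinvK (p : ℕ) : KKinv p * KK p = 1 := by
  have := RingQuot.mkAlgHom_rel ℂ (rel.KinvK (p := p))
  simpa [KK, KKinv] using this

lemma r_Ep (p : ℕ) : EE p ^ p = 0 := by
  have := RingQuot.mkAlgHom_rel ℂ (rel.Ep (p := p))
  simpa [EE] using this

lemma r_Fp (p : ℕ) : FF p ^ p = 0 := by
  have := RingQuot.mkAlgHom_rel ℂ (rel.Fp (p := p))
  simpa [FF] using this

lemma r_K2p (p : ℕ) : KK p ^ (2 * p) = 1 := by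
  have := RingQuot.mkAlgHom_rel ℂ (rel.K2p (p := p))
  simpa [KK] using this

lemma r_KE (p : ℕ) : KK p * EE p = (q p ^ 2) • (EE p * KK p) := by
  have := RingQuot.mkAlgHom_rel ℂ (rel.KE (p := p))
  simpa [KK, EE] using this

lemma r_KF (p : ℕ) : KK p * FF p = ((q p ^ 2)⁻¹) • (FF p * KK p) := by
  have := RingQuot.mkAlgHom_rel ℂ (rel.KF (p := p))
  simpa [KK, FF] using this

lemma r_EF (p : ℕ) : EE p * FF p - FF p * EE p =
    (q p - (q p)⁻¹)⁻¹ • (KK p - KKinv p) := by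
  have := RingQuot.mkAlgHom_rel ℂ (rel.EF (p := p))
  simpa [KK, EE, FF, KKinv] using this

lemma qcomm_pow {A : Type*} [Semiring A] [Algebra ℂ A] {X Y : A} {t : ℂ}
    (h : X * Y = t • (Y * X)) (j n : ℕ) : X ^ j * Y ^ n = t ^ (j * n) • (Y ^ n * X ^ j) := by
  have h1 : ∀ n, X * Y ^ n = t ^ n • (Y ^ n * X) := by
    intro n
    induction n with
    | zero => simp
    | succ n ih =>
      rw [pow_succ, ← mul_assoc, ih, smul_mul_assoc, mul_assoc, h, mul_smul_comm, smul_smul,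
        ← pow_succ, mul_assoc]
  induction j with
  | zero => simp
  | succ j ih =>
    rw [pow_succ, mul_assoc, h1, mul_smul_comm, ← mul_assoc, ih, smul_mul_assoc, smul_smul,
      mul_assoc, ← pow_add]
    congr 2
    ring

lemma Kinv_eq (p : ℕ) (hp : 2 ≤ p) : KKinv p = KK p ^ (2 * p - 1) := by
  have h : KK p ^ (2 * p - 1) * KK p = 1 := by
    rw [← pow_succ, show 2 * p - 1 + 1 = 2 * p by omega, r_K2p]
  calc KKinv p = (KK p ^ (2 * p - 1) * KK p) * KKinv p := by rw [h, one_mul]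
    _ = _ := by rw [mul_assoc, r_KKinv, mul_one]

lemma qcomm_inv {A : Type*} [Semiring A] [Algebra ℂ A] {X Xi Y : A} {t : ℂ} (ht : t ≠ 0)
    (h1 : X * Xi = 1) (h2 : Xi * X = 1)
    (h : X * Y = t • (Y * X)) : Xi * Y = t⁻¹ • (Y * Xi) := by
  have e : Xi * (X * Y) * Xi = Y * Xi := by rw [← mul_assoc, h2, one_mul]
  rw [h, mul_smul_comm, smul_mul_assoc, mul_assoc, mul_assoc, h1, mul_one] at e
  rw [← e, smul_smul, inv_mul_cancel₀ ht, one_smul]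

lemma r_KinvE (p : ℕ) : KKinv p * EE p = ((q p ^ 2)⁻¹) • (EE p * KKinv p) :=
  qcomm_inv (pow_ne_zero _ (q_ne p)) (r_KKinv p) (r_KinvK p) (r_KE p)

lemma r_KinvF (p : ℕ) : KKinv p * FF p = ((q p ^ 2)⁻¹)⁻¹ • (FF p * KKinv p) :=
  qcomm_inv (inv_ne_zero (pow_ne_zero _ (q_ne p))) (r_KKinv p) (r_KinvK p) (r_KF p)

/-! ### PBW spanning -/

/-- Monomials. -/
def mon (p m n j : ℕ) : Uq p := FF p ^ m * EE p ^ n * KK p ^ j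

/-- Span of all monomials. -/
def WW (p : ℕ) : Submodule ℂ (Uq p) :=
  Submodule.span ℂ (Set.range fun t : ℕ × ℕ × ℕ => mon p t.1 t.2.1 t.2.2)

lemma mon_mem (p m n j : ℕ) : mon p m n j ∈ WW p := Submodule.subset_span ⟨(m, n, j), rfl⟩

lemma WW_le {p : ℕ} (a : Uq p) (h : ∀ m n j, a * mon p m n j ∈ WW p) :
    ∀ x ∈ WW p, a * x ∈ WW p := by
  intro x hx
  have : WW p ≤ (WW p).comap (LinearMap.mulLeft ℂ a) := by
    unfold WW
    rw [Submodule.span_le]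
    rintro _ ⟨⟨m, n, j⟩, rfl⟩
    exact h m n j
  exact this hx

lemma F_mon (p m n j : ℕ) : FF p * mon p m n j = mon p (m + 1) n j := by
  unfold mon; rw [pow_succ']; simp only [mul_assoc]

lemma K_mon (p i m n j : ℕ) : KK p ^ i * mon p m n j =
    (((q p ^ 2)⁻¹) ^ (i * m) * (q p ^ 2) ^ (i * n)) • mon p m n (i + j) := by
  unfold mon
  rw [← mul_assoc, ← mul_assoc, qcomm_pow (r_KF p), smul_mul_assoc, mul_assoc (FF p ^ m),
    qcomm_pow (r_KE p), mul_smul_comm, smul_smul, smul_mul_assoc, pow_add]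
  simp only [mul_assoc]

lemma K_WW (p : ℕ) : ∀ x ∈ WW p, KK p * x ∈ WW p := by
  apply WW_le
  intro m n j
  have := K_mon p 1 m n j
  rw [pow_one] at this
  rw [this]
  exact Submodule.smul_mem _ _ (mon_mem _ _ _ _)

lemma Kinv_WW (p : ℕ) (hp : 2 ≤ p) : ∀ x ∈ WW p, KKinv p * x ∈ WW p := by
  apply WW_le
  intro m n j
  rw [Kinv_eq p hp, K_mon]
  exact Submodule.smul_mem _ _ (mon_mem _ _ _ _)

lemma F_WW (p : ℕ) : ∀ x ∈ WW p, FF p * x ∈ WW p := by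
  apply WW_le
  intro m n j
  rw [F_mon]; exact mon_mem _ _ _ _

lemma E_WW (p : ℕ) (hp : 2 ≤ p) : ∀ x ∈ WW p, EE p * x ∈ WW p := by
  apply WW_le
  intro m
  induction m with
  | zero =>
    intro n j
    have : EE p * mon p 0 n j = mon p 0 (n + 1) j := by
      unfold mon; rw [pow_succ']; simp only [pow_zero, one_mul, mul_assoc]
    rw [this]; exact mon_mem _ _ _ _
  | succ m ih =>
    intro n j
    rw [← F_mon, ← mul_assoc, eq_add_of_sub_eq (r_EF p), add_mul, smul_mul_assoc, sub_mul,
      mul_assoc]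
    refine Submodule.add_mem _ (Submodule.smul_mem _ _ (Submodule.sub_mem _ ?_ ?_)) ?_
    · exact K_WW p _ (mon_mem _ _ _ _)
    · exact Kinv_WW p hp _ (mon_mem _ _ _ _)
    · exact F_WW p _ (ih n j)

lemma WW_top (p : ℕ) (hp : 2 ≤ p) : WW p = ⊤ := by
  rw [eq_top_iff]
  rintro x -
  obtain ⟨y, rfl⟩ := RingQuot.mkAlgHom_surjective ℂ (rel p) x
  have : ∀ w ∈ WW p, RingQuot.mkAlgHom ℂ (rel p) y * w ∈ WW p := by
    induction y using FreeAlgebra.induction with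
    | grade0 r =>
      intro w hw
      rw [AlgHom.commutes, ← Algebra.smul_def]
      exact Submodule.smul_mem _ _ hw
    | grade1 g =>
      cases g with
      | E => exact E_WW p hp
      | F => exact F_WW p
      | K => exact K_WW p
      | Kinv => exact Kinv_WW p hp
    | mul a b ha hb =>
      intro w hw
      rw [map_mul, mul_assoc]
      exact ha _ (hb _ hw)
    | add a b ha hb =>
      intro w hw
      rw [map_add, add_mul]
      exact Submodule.add_mem _ (ha _ hw) (hb _ hw)
  have h1 := this 1 (by have := mon_mem p 0 0 0; simpa [mon] using this)
  simpa using h1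

lemma K_pow_mod (p j : ℕ) : KK p ^ j = KK p ^ (j % (2 * p)) := by
  conv_lhs => rw [← Nat.div_add_mod j (2 * p), pow_add, pow_mul, r_K2p, one_pow, one_mul]

lemma mon_zero (p m n j : ℕ) (h : p ≤ m ∨ p ≤ n) : mon p m n j = 0 := by
  unfold mon
  rcases h with h | h
  · rw [pow_eq_zero_of_le h (r_Fp p)]; simp
  · rw [pow_eq_zero_of_le h (r_Ep p)]; simp

lemma mon_mod (p m n j : ℕ) : mon p m n j = mon p m n (j % (2 * p)) := by
  unfold mon; rw [← K_pow_mod]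

/-- Two linear maps agree if they agree on the (restricted) PBW monomials. -/
lemma pbw_ext (p : ℕ) (hp : 2 ≤ p) {M : Type*} [AddCommGroup M] [Module ℂ M]
    (f g : Uq p →ₗ[ℂ] M)
    (h : ∀ m n j, m ≤ p - 1 → n ≤ p - 1 → f (mon p m n j) = g (mon p m n j)) : f = g := by
  apply LinearMap.ext_on_range (v := fun t : ℕ × ℕ × ℕ => mon p t.1 t.2.1 t.2.2) (WW_top p hp)
  rintro ⟨m, n, j⟩
  by_cases hm : p ≤ m ∨ p ≤ n
  · simp only [mon_zero p m n j hm, map_zero]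
  · exact h m n j (by omega) (by omega)

/-- The value of the integral on monomials. -/
lemma mu_mon (p : ℕ) (hp : 2 ≤ p) (μ : Uq p →ₗ[ℂ] ℂ) (Z : ℂ)
    (hμ : ∀ m n j : ℕ, m ≤ p - 1 → n ≤ p - 1 → j ≤ 2 * p - 1 →
      μ (FF p ^ m * EE p ^ n * KK p ^ j) =
        if m = p - 1 ∧ n = p - 1 ∧ j = p + 1 then Z else 0) (m n j : ℕ)
    (hm : m ≤ p - 1) (hn : n ≤ p - 1) :
    μ (mon p m n j) = if m = p - 1 ∧ n = p - 1 ∧ j % (2 * p) = p + 1 then Z else 0 := by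
  have hlt : j % (2 * p) < 2 * p := Nat.mod_lt _ (by omega)
  rw [mon_mod]
  exact hμ m n _ hm hn (by omega)

/-! ### The right integral -/

lemma qbinom {A : Type*} [Semiring A] [Algebra ℂ A] {X Y : A} {t : ℂ}
    (h : Y * X = t • (X * Y)) (m : ℕ) :
    ∃ c : ℕ → ℂ, (X + Y) ^ m = X ^ m + ∑ k ∈ Finset.range m, c k • (X ^ k * Y ^ (m - k)) := by
  induction m with
  | zero => exact ⟨0, by simp⟩
  | succ m ih =>
    obtain ⟨c, hc⟩ := ih
    have hYX : ∀ k, Y * X ^ k = t ^ k • (X ^ k * Y) := by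
      intro k
      have := qcomm_pow h 1 k
      simpa using this
    -- coefficients after multiplying on the left by `X + Y`
    refine ⟨fun k => (if k = 0 then 0 else c (k - 1)) + (if k = m then 1 else c k) * t ^ k, ?_⟩
    rw [pow_succ', hc, add_mul, mul_add, mul_add, ← pow_succ']
    simp only [add_smul, Finset.sum_add_distrib]
    rw [Finset.sum_range_succ' (fun k => (if k = 0 then (0 : ℂ) else c (k - 1)) • _),
      Finset.sum_range_succ (fun k => ((if k = m then (1 : ℂ) else c k) * t ^ k) • _)]
    simp only [if_true, zero_smul, add_zero, Nat.add_sub_cancel, Nat.succ_ne_zero, if_false,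
      Nat.add_sub_add_right, one_mul]
    have e1 : X * ∑ k ∈ Finset.range m, c k • (X ^ k * Y ^ (m - k))
        = ∑ k ∈ Finset.range m, c k • (X ^ (k + 1) * Y ^ (m - k)) := by
      rw [Finset.mul_sum]
      refine Finset.sum_congr rfl fun k _ => ?_
      rw [mul_smul_comm, ← mul_assoc, ← pow_succ']
    have e2 : Y * ∑ k ∈ Finset.range m, c k • (X ^ k * Y ^ (m - k))
        = ∑ k ∈ Finset.range m, ((if k = m then (1 : ℂ) else c k) * t ^ k) •
            (X ^ k * Y ^ (m + 1 - k)) := by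
      rw [Finset.mul_sum]
      refine Finset.sum_congr rfl fun k hk => ?_
      rw [Finset.mem_range] at hk
      rw [if_neg (by omega), mul_smul_comm, ← mul_assoc, hYX, smul_mul_assoc, mul_assoc,
        ← pow_succ', smul_smul, show m + 1 - k = m - k + 1 by omega]
    rw [e1, e2, hYX]
    simp only [show m + 1 - m = 1 by omega, pow_one]
    abel

/-- Contraction of the first tensor factor with `μ`. -/
def ctr {p : ℕ} (μ : Uq p →ₗ[ℂ] ℂ) : Uq p ⊗[ℂ] Uq p →ₗ[ℂ] Uq p :=
  (TensorProduct.lid ℂ (Uq p)).toLinearMap.comp (TensorProduct.map μ LinearMap.id)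

lemma ctr_tmul {p : ℕ} (μ : Uq p →ₗ[ℂ] ℂ) (a b : Uq p) : ctr μ (a ⊗ₜ[ℂ] b) = μ a • b := by
  simp [ctr]

lemma integral (p : ℕ) (hp : 2 ≤ p)
    (Δ : Uq p →ₐ[ℂ] (Uq p ⊗[ℂ] Uq p)) (hΔ : IsCoprod p Δ)
    (μ : Uq p →ₗ[ℂ] ℂ) (Z : ℂ)
    (hμ : ∀ m n j : ℕ, m ≤ p - 1 → n ≤ p - 1 →
      μ (mon p m n j) = if m = p - 1 ∧ n = p - 1 ∧ j % (2 * p) = p + 1 then Z else 0) (x : Uq p) :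
    ctr μ (Δ x) = μ x • 1 := by
  obtain ⟨hE, hF, hK, -⟩ := hΔ
  suffices h : (ctr μ).comp Δ.toLinearMap = (LinearMap.toSpanSingleton ℂ (Uq p) 1).comp μ by
    have := LinearMap.congr_fun h x
    simpa using this
  apply pbw_ext p hp
  intro m n j hm hn
  simp only [LinearMap.comp_apply, AlgHom.toLinearMap_apply, LinearMap.toSpanSingleton_apply]
  have hqF : (KKinv p ⊗ₜ[ℂ] FF p) * (FF p ⊗ₜ[ℂ] (1 : Uq p))
      = (((q p ^ 2)⁻¹)⁻¹) • ((FF p ⊗ₜ[ℂ] (1 : Uq p)) * (KKinv p ⊗ₜ[ℂ] FF p)) := by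
    rw [Algebra.TensorProduct.tmul_mul_tmul, Algebra.TensorProduct.tmul_mul_tmul, r_KinvF,
      TensorProduct.smul_tmul', mul_one, one_mul]
  have hqE : ((1 : Uq p) ⊗ₜ[ℂ] EE p) * (EE p ⊗ₜ[ℂ] KK p)
      = ((q p ^ 2)⁻¹) • ((EE p ⊗ₜ[ℂ] KK p) * ((1 : Uq p) ⊗ₜ[ℂ] EE p)) := by
    rw [Algebra.TensorProduct.tmul_mul_tmul, Algebra.TensorProduct.tmul_mul_tmul, r_KE,
      TensorProduct.tmul_smul, smul_smul, mul_one, one_mul,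
      inv_mul_cancel₀ (pow_ne_zero _ (q_ne p)), one_smul]
  obtain ⟨c, hc⟩ := qbinom (A := Uq p ⊗[ℂ] Uq p) hqF m
  obtain ⟨c', hc'⟩ := qbinom (A := Uq p ⊗[ℂ] Uq p) hqE n
  have hK0 : ∀ a : ℕ, ∀ b e : ℕ, b ≤ p - 1 → e ≤ p - 1 → ∀ i : ℕ, (b ≠ p - 1 ∨ e ≠ p - 1) →
      μ (FF p ^ b * KKinv p ^ a * (EE p ^ e) * KK p ^ i) = 0 := by
    intro a b e hb he i hne
    rw [Kinv_eq p hp, ← pow_mul, mul_assoc (FF p ^ b), qcomm_pow (r_KE p), mul_smul_comm,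
      smul_mul_assoc, map_smul]
    have := hμ b e ((2 * p - 1) * a + i) hb he
    unfold mon at this
    rw [pow_add, ← mul_assoc] at this
    rw [← mul_assoc, this, if_neg (by omega), smul_zero]
  have hmain : Δ (mon p m n j) =
      (FF p ^ m * EE p ^ n * KK p ^ j) ⊗ₜ[ℂ] (KK p ^ n * KK p ^ j)
      + ∑ k ∈ Finset.range n, c' k •
        ((FF p ^ m * EE p ^ k * KK p ^ j) ⊗ₜ[ℂ] (KK p ^ k * EE p ^ (n - k) * KK p ^ j))
      + ∑ k ∈ Finset.range m, c k •
        ((FF p ^ k * KKinv p ^ (m - k) * EE p ^ n * KK p ^ j) ⊗ₜ[ℂ]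
          (FF p ^ (m - k) * KK p ^ n * KK p ^ j))
      + ∑ k ∈ Finset.range m, ∑ l ∈ Finset.range n, (c k * c' l) •
        ((FF p ^ k * KKinv p ^ (m - k) * EE p ^ l * KK p ^ j) ⊗ₜ[ℂ]
          (FF p ^ (m - k) * (KK p ^ l * EE p ^ (n - l)) * KK p ^ j)) := by
    unfold mon
    rw [map_mul, map_mul, map_pow, map_pow, map_pow, hE, hF, hK, hc, add_comm (1 ⊗ₜ[ℂ] EE p), hc']
    simp only [Algebra.TensorProduct.tmul_pow, Algebra.TensorProduct.tmul_mul_tmul, add_mul,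
      mul_add, Finset.sum_mul, Finset.mul_sum, smul_mul_assoc, mul_smul_comm, one_pow,
      one_mul, mul_one]
    rw [Finset.sum_comm]
    simp only [smul_add, Finset.sum_add_distrib, Finset.smul_sum, smul_smul, mul_comm (c' _)]
    abel
  rw [hmain]
  simp only [map_add, map_sum, map_smul, ctr_tmul]
  rw [Finset.sum_eq_zero (s := Finset.range n), Finset.sum_eq_zero (s := Finset.range m),
    Finset.sum_eq_zero (s := Finset.range m)]
  · have := hμ m n j hm hn
    unfold mon at this ⊢
    rw [this]
    simp only [add_zero]
    split_ifs with h
    · rw [← pow_add, K_pow_mod]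
      have : (n + j) % (2 * p) = 0 := by
        rw [Nat.add_mod, h.2.2, h.2.1, Nat.mod_eq_of_lt (by omega : p - 1 < 2 * p),
          show p - 1 + (p + 1) = 2 * p by omega, Nat.mod_self]
      rw [this, pow_zero]
    · simp
  · intro k hk
    rw [Finset.mem_range] at hk
    refine Finset.sum_eq_zero fun l hl => ?_
    rw [Finset.mem_range] at hl
    rw [hK0 _ _ _ (by omega) (by omega) _ (by omega), zero_smul, smul_zero]
  · intro k hk
    rw [Finset.mem_range] at hk
    rw [hK0 _ _ _ (by omega) (by omega) _ (by omega), zero_smul, smul_zero]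
  · intro k hk
    rw [Finset.mem_range] at hk
    have := hμ m k j hm (by omega)
    unfold mon at this
    rw [this, if_neg (by omega), zero_smul, smul_zero]

/-! ### The Casimir element -/

/-- The Casimir element. -/
def CC (p : ℕ) : Uq p := FF p * EE p + (dd p)⁻¹ • (q p • KK p + (q p)⁻¹ • KKinv p)

lemma CC_E (p : ℕ) (hp : 2 ≤ p) : CC p * EE p = EE p * CC p := by
  have h := q_sub_ne p hp
  have h0 := q_ne p
  unfold CC
  rw [add_mul, mul_add, ← mul_assoc (EE p), eq_add_of_sub_eq (r_EF p), smul_mul_assoc,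
    mul_smul_comm, add_mul, add_mul, mul_add, smul_mul_assoc, smul_mul_assoc, smul_mul_assoc,
    mul_smul_comm, mul_smul_comm, sub_mul, r_KE, r_KinvE]
  simp only [smul_add, smul_sub, smul_smul]
  have e1 : (dd p)⁻¹ * (q p * q p ^ 2) = (q p - (q p)⁻¹)⁻¹ * q p ^ 2 + (dd p)⁻¹ * q p := by
    unfold dd; field_simp; ring
  have e2 : (dd p)⁻¹ * ((q p)⁻¹ * (q p ^ 2)⁻¹)
      = -((q p - (q p)⁻¹)⁻¹ * (q p ^ 2)⁻¹) + (dd p)⁻¹ * (q p)⁻¹ := by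
    unfold dd; field_simp; ring
  rw [e1, e2, add_smul, add_smul, neg_smul]
  abel

lemma CC_K (p : ℕ) : KK p * CC p = CC p * KK p := by
  have h0 := q_ne p
  unfold CC
  rw [mul_add, add_mul, ← mul_assoc, r_KF, smul_mul_assoc, mul_assoc (FF p), r_KE, mul_smul_comm,
    smul_smul, inv_mul_cancel₀ (pow_ne_zero _ h0), one_smul, mul_assoc (FF p)]
  simp only [mul_smul_comm, smul_mul_assoc, mul_add, add_mul, r_KKinv, r_KinvK]

lemma FE_C (p : ℕ) (hp : 2 ≤ p) (m : ℕ) : ∃ a b : ℂ, ∀ j, mon p m m j * CC p =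
    mon p (m + 1) (m + 1) j + (a • mon p m m (j + 1) + b • mon p m m (j + (2 * p - 1))) := by
  have hcE : EE p ^ m * CC p = CC p * EE p ^ m :=
    ((show Commute (EE p) (CC p) from (CC_E p hp).symm).pow_left m)
  have hcK : ∀ j, KK p ^ j * CC p = CC p * KK p ^ j := fun j =>
    ((show Commute (KK p) (CC p) from CC_K p).pow_left j)
  have hKE := qcomm_pow (r_KE p) 1 m
  have hKiE := qcomm_pow (r_KinvE p) 1 m
  rw [pow_one] at hKE hKiE
  refine ⟨(dd p)⁻¹ * (q p * (q p ^ 2) ^ (1 * m)), (dd p)⁻¹ * ((q p)⁻¹ * ((q p ^ 2)⁻¹) ^ (1 * m)), ?_⟩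
  intro j
  unfold mon
  have e1 : FF p ^ m * CC p * EE p ^ m = FF p ^ (m + 1) * EE p ^ (m + 1)
      + ((dd p)⁻¹ * (q p * (q p ^ 2) ^ (1 * m))) • (FF p ^ m * EE p ^ m * KK p)
      + ((dd p)⁻¹ * ((q p)⁻¹ * ((q p ^ 2)⁻¹) ^ (1 * m))) • (FF p ^ m * EE p ^ m * KKinv p) := by
    unfold CC
    rw [mul_add, add_mul, mul_assoc (FF p ^ m), mul_assoc (FF p), ← pow_succ', ← mul_assoc,
      ← pow_succ, add_assoc]
    congr 1
    rw [mul_assoc, smul_mul_assoc, add_mul, smul_mul_assoc, smul_mul_assoc, hKE, hKiE]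
    simp only [mul_smul_comm, mul_add, smul_add, smul_smul, mul_assoc]
  rw [mul_assoc, hcK, ← mul_assoc, mul_assoc (FF p ^ m), hcE, ← mul_assoc, e1, add_mul, add_mul,
    smul_mul_assoc, smul_mul_assoc, Kinv_eq p hp, mul_assoc _ (KK p), mul_assoc _ (KK p ^ _),
    ← pow_succ', ← pow_add, add_assoc, add_comm j (2 * p - 1)]

/-- Span of the lower weight-zero monomials. -/
def DD (p n : ℕ) : Submodule ℂ (Uq p) :=
  Submodule.span ℂ {x | ∃ m j, m < n ∧ x = mon p m m j}

lemma DD_mono (p : ℕ) {n n' : ℕ} (h : n ≤ n') : DD p n ≤ DD p n' := by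
  apply Submodule.span_mono
  rintro x ⟨m, j, hm, rfl⟩
  exact ⟨m, j, by omega, rfl⟩

lemma mon_DD (p : ℕ) {m n : ℕ} (h : m < n) (j : ℕ) : mon p m m j ∈ DD p n :=
  Submodule.subset_span ⟨m, j, h, rfl⟩

lemma DD_C (p : ℕ) (hp : 2 ≤ p) (n : ℕ) : ∀ x ∈ DD p n, x * CC p ∈ DD p (n + 1) := by
  intro x hx
  have : DD p n ≤ (DD p (n + 1)).comap (LinearMap.mulRight ℂ (CC p)) := by
    conv_lhs => unfold DD
    rw [Submodule.span_le]
    rintro _ ⟨m, j, hm, rfl⟩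
    obtain ⟨a, b, h⟩ := FE_C p hp m
    simp only [Submodule.comap_coe, Set.mem_preimage, SetLike.mem_coe, LinearMap.mulRight_apply, h]
    refine Submodule.add_mem _ (mon_DD p (by omega) _) (Submodule.add_mem _ ?_ ?_)
    · exact Submodule.smul_mem _ _ (mon_DD p (by omega) _)
    · exact Submodule.smul_mem _ _ (mon_DD p (by omega) _)
  exact this hx

lemma C_pow (p : ℕ) (hp : 2 ≤ p) (n j : ℕ) : CC p ^ n * KK p ^ j - mon p n n j ∈ DD p n := by
  induction n with
  | zero => simp [mon]
  | succ n ih =>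
    have hcK : KK p ^ j * CC p = CC p * KK p ^ j :=
      ((show Commute (KK p) (CC p) from CC_K p).pow_left j)
    have h1 := DD_C p hp n _ ih
    obtain ⟨a, b, h⟩ := FE_C p hp n
    rw [sub_mul, h, mul_assoc, hcK, ← mul_assoc, ← pow_succ] at h1
    have h2 : a • mon p n n (j + 1) + b • mon p n n (j + (2 * p - 1)) ∈ DD p (n + 1) :=
      Submodule.add_mem _ (Submodule.smul_mem _ _ (mon_DD p (by omega) _))
        (Submodule.smul_mem _ _ (mon_DD p (by omega) _))
    have h3 := Submodule.add_mem _ h1 h2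
    convert h3 using 1
    abel

lemma cas_ext (p : ℕ) (hp : 2 ≤ p) (f g : Uq p →ₗ[ℂ] ℂ)
    (h1 : ∀ m n j, m ≤ p - 1 → n ≤ p - 1 → m ≠ n → f (mon p m n j) = g (mon p m n j))
    (h2 : ∀ n j, n ≤ p - 1 → f (CC p ^ n * KK p ^ j) = g (CC p ^ n * KK p ^ j)) : f = g := by
  apply pbw_ext p hp
  intro m n j hm hn
  by_cases hmn : m = n
  · subst hmn
    clear hn
    induction m using Nat.strong_induction_on generalizing j with
    | _ m ih =>
      have hD : DD p m ≤ LinearMap.eqLocus f g := by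
        unfold DD
        rw [Submodule.span_le]
        rintro _ ⟨k, i, hk, rfl⟩
        exact ih k hk i (by omega)
      have h3 : f _ = g _ := hD (C_pow p hp m j)
      rw [map_sub, map_sub, h2 m j hm] at h3
      exact sub_right_inj.mp h3
  · exact h1 m n j hm hn hmn

lemma mu_C (p : ℕ) (hp : 2 ≤ p) (μ : Uq p →ₗ[ℂ] ℂ) (Z : ℂ)
    (hμ : ∀ m n j : ℕ, m ≤ p - 1 → n ≤ p - 1 →
      μ (mon p m n j) = if m = p - 1 ∧ n = p - 1 ∧ j % (2 * p) = p + 1 then Z else 0)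
    (n j : ℕ) (hn : n ≤ p - 1) :
    μ (KK p ^ (p + 1) * (CC p ^ n * KK p ^ j)) =
      if n = p - 1 ∧ 2 * p ∣ j then Z else 0 := by
  have hcK : KK p ^ (p + 1) * CC p ^ n = CC p ^ n * KK p ^ (p + 1) :=
    ((show Commute (KK p) (CC p) from CC_K p).pow_pow _ _)
  rw [← mul_assoc, hcK, mul_assoc, ← pow_add]
  have h1 : μ (CC p ^ n * KK p ^ (p + 1 + j)) = μ (mon p n n (p + 1 + j)) := by
    have hD : DD p n ≤ LinearMap.ker μ := by
      unfold DD
      rw [Submodule.span_le]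
      rintro _ ⟨k, i, hk, rfl⟩
      rw [SetLike.mem_coe, LinearMap.mem_ker, hμ k k i (by omega) (by omega), if_neg (by omega)]
    have h3 : μ _ = 0 := hD (C_pow p hp n (p + 1 + j))
    rw [map_sub] at h3
    exact sub_eq_zero.mp h3
  rw [h1, hμ n n _ hn hn]
  have : (p + 1 + j) % (2 * p) = p + 1 ↔ 2 * p ∣ j := by
    have e : (p + 1) % (2 * p) = p + 1 := Nat.mod_eq_of_lt (by omega)
    constructor
    · intro h
      have h2 : p + 1 + j ≡ p + 1 + 0 [MOD 2 * p] := by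
        unfold Nat.ModEq; rw [h, add_zero, e]
      exact (Nat.modEq_zero_iff_dvd).1 (Nat.ModEq.add_left_cancel' _ h2)
    · rintro ⟨k, rfl⟩
      rw [Nat.add_mul_mod_self_left, e]
  simp only [this]
  by_cases hh : n = p - 1 <;> simp [hh]

lemma mu_off (p : ℕ) (μ : Uq p →ₗ[ℂ] ℂ) (Z : ℂ)
    (hμ : ∀ m n j : ℕ, m ≤ p - 1 → n ≤ p - 1 →
      μ (mon p m n j) = if m = p - 1 ∧ n = p - 1 ∧ j % (2 * p) = p + 1 then Z else 0)
    (m n j : ℕ) (hm : m ≤ p - 1) (hn : n ≤ p - 1) (h : m ≠ n) :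
    μ (KK p ^ (p + 1) * mon p m n j) = 0 := by
  rw [K_mon, map_smul, hμ m n _ hm hn, if_neg (by omega), smul_zero]

/-! ### Representations -/

section reps

variable {ι : Type} [Fintype ι] [DecidableEq ι]

lemma rep_Kpow (p : ℕ) (ρ : Uq p →ₐ[ℂ] Matrix ι ι ℂ) (δ : ι → ℂ)
    (hK : ρ (KK p) = Matrix.diagonal δ) (j : ℕ) :
    ρ (KK p ^ j) = Matrix.diagonal (fun i => δ i ^ j) := by
  rw [map_pow, hK, Matrix.diagonal_pow]; rfl

lemma rep_Kinv (p : ℕ) (ρ : Uq p →ₐ[ℂ] Matrix ι ι ℂ) (δ : ι → ℂ) (hδ : ∀ i, δ i ≠ 0)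
    (hK : ρ (KK p) = Matrix.diagonal δ) : ρ (KKinv p) = Matrix.diagonal (fun i => (δ i)⁻¹) := by
  have h1 : ρ (KK p) * ρ (KKinv p) = 1 := by rw [← map_mul, r_KKinv, map_one]
  ext i j
  have h2 := congrFun (congrFun h1 i) j
  rw [hK, Matrix.diagonal_mul] at h2
  rw [Matrix.diagonal_apply]
  rw [Matrix.one_apply] at h2
  have := hδ i
  split_ifs at h2 ⊢ with h
  · exact eq_inv_of_mul_eq_one_right h2
  · simpa [this] using h2

lemma rep_C (p : ℕ) (ρ : Uq p →ₐ[ℂ] Matrix ι ι ℂ) (δ : ι → ℂ) (hδ : ∀ i, δ i ≠ 0)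
    (hK : ρ (KK p) = Matrix.diagonal δ) : ρ (CC p) = ρ (FF p) * ρ (EE p) +
      Matrix.diagonal (fun i => (dd p)⁻¹ * (q p * δ i + (q p)⁻¹ * (δ i)⁻¹)) := by
  unfold CC
  rw [map_add, map_mul, map_smul, map_add, map_smul, map_smul, hK, rep_Kinv p ρ δ hδ hK]
  congr 1
  ext i j
  simp only [Matrix.smul_apply, Matrix.add_apply, Matrix.diagonal_apply, smul_eq_mul]
  split_ifs <;> simp

/-- Weight argument. -/
lemma rep_off (p : ℕ) (hp : 2 ≤ p) (ρ : Uq p →ₐ[ℂ] Matrix ι ι ℂ) (δ : ι → ℂ) (hδ : ∀ i, δ i ≠ 0)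
    (hK : ρ (KK p) = Matrix.diagonal δ) (m n j : ℕ) (hm : m ≤ p - 1) (hn : n ≤ p - 1) (hmn : m ≠ n)
    (u v : ι) (huv : δ u = δ v) : ρ (mon p m n j) u v = 0 := by
  have h1 := K_mon p 1 m n j
  have h2 : mon p m n (1 + j) = mon p m n j * KK p := by
    unfold mon; rw [add_comm, pow_succ, ← mul_assoc]
  rw [pow_one, h2] at h1
  have h3 := congrFun (congrFun (congrArg ρ h1) u) v
  rw [map_mul, map_smul, map_mul, hK, Matrix.diagonal_mul, Matrix.smul_apply, Matrix.mul_diagonal,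
    smul_eq_mul, huv] at h3
  have h0 := q_ne p
  have ht : ((q p ^ 2)⁻¹) ^ (1 * m) * (q p ^ 2) ^ (1 * n) = q p ^ (2 * ((n : ℤ) - m)) := by
    rw [one_mul, one_mul, inv_pow, ← pow_mul, ← pow_mul, ← zpow_natCast, ← zpow_natCast, ← zpow_neg,
      ← zpow_add₀ h0]
    congr 1; push_cast; ring
  have hne : q p ^ (2 * ((n : ℤ) - m)) ≠ 1 := by
    rw [Ne, q_zpow_eq_one p hp]
    rintro ⟨k, hk⟩
    push_cast at hk
    have hk' : (n : ℤ) - m = p * k := by linarith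
    have a1 : k < 1 := by by_contra hh; have : (p : ℤ) * 1 ≤ p * k := by gcongr; omega
                          omega
    have a2 : -1 < k := by by_contra hh; have : (p : ℤ) * k ≤ p * (-1) := by gcongr; omega
                           omega
    have : k = 0 := by omega
    subst this
    omega
  rw [ht] at h3
  have h4 : (1 - q p ^ (2 * ((n : ℤ) - m))) * δ v * ρ (mon p m n j) u v = 0 := by
    linear_combination h3
  have h5 : (1 - q p ^ (2 * ((n : ℤ) - m))) ≠ 0 := sub_ne_zero.2 hne.symm
  simpa [h5, hδ v] using h4

end reps

lemma alpha_ne {α : ℂ} (hα : α = 1 ∨ α = -1) : α ≠ 0 := by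
  rcases hα with rfl | rfl <;> norm_num

lemma alpha_inv {α : ℂ} (hα : α = 1 ∨ α = -1) : α⁻¹ = α := by
  rcases hα with rfl | rfl <;> norm_num

lemma cas_id (p : ℕ) (hp : 2 ≤ p) {α : ℂ} (hα : α = 1 ∨ α = -1) (s i : ℤ) :
    α * qi p i * qi p (s - i) + (dd p)⁻¹ * (q p * (α * q p ^ (s - 1 - 2 * i))
      + (q p)⁻¹ * (α * q p ^ (s - 1 - 2 * i))⁻¹) = α * cc p s := by
  have h := q_sub_ne p hp
  have h0 := q_ne p
  have e1 : q p * (α * q p ^ (s - 1 - 2 * i)) = α * (q p ^ s * (q p ^ i)⁻¹ * (q p ^ i)⁻¹) := by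
    rw [← zpow_neg, ← zpow_add₀ h0, ← zpow_add₀ h0, mul_left_comm, ← zpow_one_add₀ h0]
    congr 2; ring
  have e2 : (q p)⁻¹ * (α * q p ^ (s - 1 - 2 * i))⁻¹ = α * ((q p ^ s)⁻¹ * q p ^ i * q p ^ i) := by
    rw [← mul_inv, e1, mul_inv, alpha_inv hα]
    simp only [mul_inv, inv_inv]
  rw [e1, e2]
  unfold qi cc zz dd
  rw [neg_sub, zpow_sub₀ h0, zpow_sub₀ h0, zpow_neg, zpow_neg]
  have hi : q p ^ i ≠ 0 := zpow_ne_zero _ h0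
  have hs : q p ^ s ≠ 0 := zpow_ne_zero _ h0
  generalize q p ^ i = x at *
  generalize q p ^ s = y at *
  generalize q p - (q p)⁻¹ = w at *
  field_simp
  ring

lemma fin_sum_FE {n : ℕ} (t i : Fin n) (A : ℂ) :
    ∑ k : Fin n, (if (t : ℕ) = (k : ℕ) + 1 then (1 : ℂ) else 0) *
      (if (k : ℕ) + 1 = (i : ℕ) then A else 0) = if t = i ∧ (i : ℕ) ≠ 0 then A else 0 := by
  split_ifs with h
  · obtain ⟨rfl, h⟩ := h
    rw [Finset.sum_eq_single ⟨(t : ℕ) - 1, by omega⟩]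
    · rw [if_pos (by simp; omega), if_pos (by simp; omega), one_mul]
    · intro b _ hb
      rw [if_neg, zero_mul]
      intro hh
      exact hb (Fin.ext (by simp; omega))
    · simp
  · refine Finset.sum_eq_zero fun k _ => ?_
    by_cases h1 : (t : ℕ) = k + 1
    · rw [if_neg (c := (k : ℕ) + 1 = i), mul_zero]
      intro h2
      exact h ⟨Fin.ext (by omega), by omega⟩
    · rw [if_neg h1, zero_mul]

lemma qi_zero (p : ℕ) : qi p 0 = 0 := by simp [qi]

lemma X_C (p : ℕ) (hp : 2 ≤ p) {α : ℂ} (hα : α = 1 ∨ α = -1) (s : ℕ)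
    (ρ : Uq p →ₐ[ℂ] Matrix (Fin s) (Fin s) ℂ)
    (hK : ρ (KK p) = XK p α s) (hE : ρ (EE p) = XE p α s) (hF : ρ (FF p) = XF s) :
    ρ (CC p) = (α * cc p s) • (1 : Matrix (Fin s) (Fin s) ℂ) := by
  have h0 := q_ne p
  rw [rep_C p ρ _ (fun i => mul_ne_zero (alpha_ne hα) (zpow_ne_zero _ h0)) hK, hE, hF]
  ext t i
  rw [Matrix.add_apply, Matrix.mul_apply]
  simp only [XF, XE, Matrix.of_apply]
  rw [fin_sum_FE, Matrix.diagonal_apply, Matrix.smul_apply, Matrix.one_apply]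
  by_cases h : t = i
  · subst h
    have := cas_id p hp hα s (t : ℕ)
    simp only [true_and, if_true, smul_eq_mul, mul_one]
    rw [← this]
    congr 1
    split_ifs with h1
    · rfl
    · push Not at h1
      rw [h1]; simp [qi_zero]
  · simp [h]

lemma X_chi (p : ℕ) (hp : 2 ≤ p) {α : ℂ} (hα : α = 1 ∨ α = -1) (s : ℕ)
    (ρ : Uq p →ₐ[ℂ] Matrix (Fin s) (Fin s) ℂ)
    (hK : ρ (KK p) = XK p α s) (hE : ρ (EE p) = XE p α s) (hF : ρ (FF p) = XF s) (n j : ℕ) :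
    chiOf p ρ (CC p ^ n * KK p ^ j) =
      (α * cc p s) ^ n * ∑ i ∈ Finset.range s, (α * q p ^ ((s : ℤ) - 1 - 2 * (i : ℕ))) ^ j := by
  unfold chiOf
  rw [LinearMap.comp_apply, AlgHom.toLinearMap_apply, map_mul, map_pow, X_C p hp hα s ρ hK hE hF,
    rep_Kpow p ρ _ hK, smul_pow, one_pow, smul_mul_assoc, one_mul, map_smul,
    Matrix.traceLinearMap_apply, Matrix.trace_diagonal, smul_eq_mul, Finset.sum_range]

lemma X_off (p : ℕ) (hp : 2 ≤ p) {α : ℂ} (hα : α = 1 ∨ α = -1) (s : ℕ)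
    (ρ : Uq p →ₐ[ℂ] Matrix (Fin s) (Fin s) ℂ)
    (hK : ρ (KK p) = XK p α s) (m n j : ℕ) (hm : m ≤ p - 1) (hn : n ≤ p - 1) (hmn : m ≠ n) :
    chiOf p ρ (mon p m n j) = 0 := by
  unfold chiOf
  rw [LinearMap.comp_apply, AlgHom.toLinearMap_apply, Matrix.traceLinearMap_apply, Matrix.trace]
  refine Finset.sum_eq_zero fun i _ => ?_
  exact rep_off p hp ρ _ (fun i => mul_ne_zero (alpha_ne hα) (zpow_ne_zero _ (q_ne p))) hK
    m n j hm hn hmn i i rfl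

/-- Index of `a_l`. -/
abbrev ia {p s : ℕ} (l : Fin s) : PIdx p s := Sum.inr (Sum.inr (Sum.inr l))

/-- Index of `b_i`. -/
abbrev ib {p s : ℕ} (l : Fin s) : PIdx p s := Sum.inl l

lemma PKdiag_ne (p : ℕ) {α : ℂ} (hα : α = 1 ∨ α = -1) (s : ℕ) (t : PIdx p s) :
    PKdiag p α s t ≠ 0 := by
  have h1 := alpha_ne hα
  have h2 : -α ≠ 0 := neg_ne_zero.2 h1
  have h0 := q_ne p
  rcases t with t | t | t | t
  · exact mul_ne_zero h1 (zpow_ne_zero _ h0)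
  · exact mul_ne_zero h2 (zpow_ne_zero _ h0)
  · exact mul_ne_zero h2 (zpow_ne_zero _ h0)
  · exact mul_ne_zero h1 (zpow_ne_zero _ h0)

lemma PFPE_b (p : ℕ) (α : ℂ) (s : ℕ) (hs : s ≤ p - 1) (hp : 2 ≤ p) (i : Fin s) (t : PIdx p s) :
    (PF p s * PE p α s) t (ib i) =
      (if t = ib i then α * qi p (i : ℕ) * qi p ((s : ℤ) - (i : ℕ)) else 0)
      + (if t = ia i then 1 else 0) := by
  rw [Matrix.mul_apply]
  simp only [Fintype.sum_sum_type, PF, PE, Matrix.of_apply, ia, ib]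
  rcases t with t | t | t | t
  · simp only [zero_mul, mul_zero, Finset.sum_const_zero, add_zero, reduceCtorEq, if_false,
      Sum.inl.injEq]
    rw [fin_sum_FE]
    by_cases h : t = i
    · by_cases h1 : (i : ℕ) = 0
      · simp [h, h1, qi_zero]
      · simp [h, h1]
    · simp [h]
  · simp only [zero_mul, mul_zero, Finset.sum_const_zero, add_zero, zero_add, reduceCtorEq, if_false,
      Sum.inr.injEq]
    refine Finset.sum_eq_zero fun k _ => ?_
    have := t.2
    split_ifs <;> first | omega | simp
  · simp only [zero_mul, mul_zero, Finset.sum_const_zero, add_zero, zero_add, reduceCtorEq, if_false,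
      Sum.inr.injEq]
    refine Finset.sum_eq_zero fun k _ => ?_
    have := i.2
    split_ifs <;> first | omega | simp
  · simp only [zero_mul, mul_zero, Finset.sum_const_zero, add_zero, zero_add, reduceCtorEq, if_false,
      Sum.inr.injEq]
    rw [fin_sum_FE]
    have h1 : ∑ k : Fin (p - s), (if (k : ℕ) + 1 = p - s ∧ (t : ℕ) = 0 then (1 : ℂ) else 0) *
        (if (i : ℕ) = 0 ∧ (k : ℕ) + 1 = p - s then 1 else 0)
        = if (t : ℕ) = 0 ∧ (i : ℕ) = 0 then 1 else 0 := by
      rw [Finset.sum_eq_single ⟨p - s - 1, by omega⟩]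
      · have : p - s - 1 + 1 = p - s := by omega
        simp only [this, true_and, and_true]
        split_ifs <;> first | omega | simp
      · intro b _ hb
        rw [if_neg, zero_mul]
        intro hh
        exact hb (Fin.ext (by simp; omega))
      · simp
    rw [h1]
    have e : t = i ↔ (t : ℕ) = i := Fin.ext_iff
    simp only [e]
    split_ifs <;> first | omega | simp

lemma PFPE_a (p : ℕ) (α : ℂ) (s : ℕ) (i : Fin s) (t : PIdx p s) :
    (PF p s * PE p α s) t (ia i) =
      (if t = ia i then α * qi p (i : ℕ) * qi p ((s : ℤ) - (i : ℕ)) else 0) := by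
  rw [Matrix.mul_apply]
  simp only [Fintype.sum_sum_type, PF, PE, Matrix.of_apply, ia]
  rcases t with t | t | t | t
  · simp
  · simp
  · simp
  · simp only [zero_mul, mul_zero, Finset.sum_const_zero, add_zero, zero_add,
      Sum.inr.injEq]
    rw [fin_sum_FE]
    by_cases h : t = i
    · by_cases h1 : (i : ℕ) = 0
      · simp [h, h1, qi_zero]
      · simp [h, h1]
    · simp [h]

lemma pow_col {ι : Type} [Fintype ι] [DecidableEq ι] (M : Matrix ι ι ℂ) (c : ℂ) (b a : ι)
    (hab : a ≠ b)
    (h1 : ∀ t, M t b = (if t = b then c else 0) + (if t = a then 1 else 0))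
    (h2 : ∀ t, M t a = if t = a then c else 0) (n : ℕ) :
    ∀ t, (M ^ n) t b = (if t = b then c ^ n else 0) + (if t = a then n * c ^ (n - 1) else 0) := by
  have ha : ∀ n t, (M ^ n) t a = if t = a then c ^ n else 0 := by
    intro n
    induction n with
    | zero => intro t; simp [Matrix.one_apply]
    | succ n ih =>
      intro t
      rw [pow_succ, Matrix.mul_apply]
      simp only [h2, mul_ite, mul_zero, Finset.sum_ite_eq', Finset.mem_univ, if_true, ih]
      split_ifs <;> ring
  induction n with
  | zero => intro t; simp [Matrix.one_apply]
  | succ n ih =>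
    intro t
    rw [pow_succ, Matrix.mul_apply]
    simp only [h1, mul_add, mul_ite, mul_zero, mul_one, Finset.sum_add_distrib, Finset.sum_ite_eq',
      Finset.mem_univ, if_true, ih, ha]
    by_cases e1 : t = b
    · have : t ≠ a := fun e => hab (e ▸ e1)
      simp [e1, hab.symm]; ring
    · by_cases e2 : t = a
      · subst e2
        simp only [e1, if_false, if_true, zero_add, Nat.add_sub_cancel]
        rcases n with _ | n
        · simp
        · simp only [Nat.add_sub_cancel]; push_cast; ring
      · simp [e1, e2]

lemma P_H (p : ℕ) (hp : 2 ≤ p) {α : ℂ} (hα : α = 1 ∨ α = -1) (s : ℕ) (hs : s ≤ p - 1)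
    (ρ : Uq p →ₐ[ℂ] Matrix (PIdx p s) (PIdx p s) ℂ)
    (hK : ρ (KK p) = PK p α s) (hE : ρ (EE p) = PE p α s) (hF : ρ (FF p) = PF p s) (n j : ℕ)
    (i : Fin s) :
    ρ (CC p ^ n * KK p ^ j) (ia i) (ib i) =
      n * (α * cc p s) ^ (n - 1) * (α * q p ^ ((s : ℤ) - 1 - 2 * (i : ℕ))) ^ j := by
  have hC := rep_C p ρ _ (PKdiag_ne p hα s) hK
  rw [hE, hF] at hC
  have hid := cas_id p hp hα s (i : ℕ)
  have key := pow_col (ρ (CC p)) (α * cc p s) (ib i) (ia i) (by simp) ?_ ?_ n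
  · rw [map_mul, rep_Kpow p ρ _ hK, Matrix.mul_diagonal, map_pow, key]
    simp [PKdiag]
  · intro t
    rw [hC, Matrix.add_apply, PFPE_b p α s hs hp, Matrix.diagonal_apply, ← hid]
    by_cases h : t = ib i
    · subst h; simp [PKdiag]
    · simp [h]
  · intro t
    rw [hC, Matrix.add_apply, PFPE_a, Matrix.diagonal_apply, ← hid]
    by_cases h : t = ia i
    · subst h; simp [PKdiag]
    · simp [h]

lemma P_off (p : ℕ) (hp : 2 ≤ p) {α : ℂ} (hα : α = 1 ∨ α = -1) (s : ℕ)
    (ρ : Uq p →ₐ[ℂ] Matrix (PIdx p s) (PIdx p s) ℂ)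
    (hK : ρ (KK p) = PK p α s) (m n j : ℕ) (hm : m ≤ p - 1) (hn : n ≤ p - 1) (hmn : m ≠ n)
    (i : Fin s) : ρ (mon p m n j) (ia i) (ib i) = 0 :=
  rep_off p hp ρ _ (PKdiag_ne p hα s) hK m n j hm hn hmn _ _ rfl

lemma GOf_apply (p : ℕ)
    (ρP : (α : ℂ) → (s : ℕ) → (Uq p →ₐ[ℂ] Matrix (PIdx p s) (PIdx p s) ℂ)) (s : ℕ) (u : Uq p) :
    GOf p ρP s u = ∑ i : Fin s, ρP 1 s u (ia i) (ib i)
      + ∑ i : Fin (p - s), ρP (-1) (p - s) u (ia i) (ib i) := by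
  unfold GOf
  rw [LinearMap.add_apply, LinearMap.sum_apply, LinearMap.sum_apply]
  rfl

/-! ### Weight sums and the final assembly -/

/-- Sum over all the weights attached to `s`. -/
def ww (p j : ℕ) (s : ℕ) : ℂ := ∑ i ∈ Finset.range p, (q p ^ ((s : ℤ) - 1 - 2 * (i : ℕ))) ^ j

lemma neg_q (p : ℕ) (hp : 2 ≤ p) (k : ℤ) : -1 * q p ^ k = q p ^ (k - p) := by
  have : q p ^ (k - p) = q p ^ (k + p) := by
    rw [← q_zpow_add_period p hp (k - p) 1]; congr 1; ring
  rw [this, zpow_add₀ (q_ne p), zpow_natCast, q_pow_p p hp]; ring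

lemma ww_split (p : ℕ) (hp : 2 ≤ p) (j s : ℕ) (hs : s ≤ p) :
    ∑ i ∈ Finset.range s, (1 * q p ^ ((s : ℤ) - 1 - 2 * (i : ℕ))) ^ j
      + ∑ i ∈ Finset.range (p - s), (-1 * q p ^ (((p - s : ℕ) : ℤ) - 1 - 2 * (i : ℕ))) ^ j
      = ww p j s := by
  unfold ww
  conv_rhs => rw [← Nat.add_sub_cancel' hs, Finset.sum_range_add, Nat.add_sub_cancel' hs]
  simp only [one_mul]
  congr 1
  refine Finset.sum_congr rfl fun i _ => ?_
  rw [neg_q p hp]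
  congr 2
  rw [Nat.cast_sub hs]; push_cast; ring

lemma ww_eq (p : ℕ) (hp : 2 ≤ p) (j s : ℕ) :
    ww p j s = q p ^ (((s : ℤ) - 1) * j) * if p ∣ j then (p : ℂ) else 0 := by
  have h2 : IsPrimitiveRoot (q p ^ 2) p := (q_prim p hp).pow (by omega) (by ring)
  have h3 := root_sum h2 (-(j : ℤ))
  have h4 : ((p : ℤ) ∣ -(j : ℤ)) ↔ p ∣ j := by rw [dvd_neg, Int.natCast_dvd_natCast]
  simp only [h4] at h3
  rw [← h3]
  unfold ww
  rw [Finset.mul_sum]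
  refine Finset.sum_congr rfl fun i _ => ?_
  have h0 := q_ne p
  rw [← zpow_natCast (q p ^ ((s : ℤ) - 1 - 2 * (i : ℕ))), ← zpow_mul, ← zpow_natCast _ i,
    ← zpow_natCast (q p) 2, ← zpow_mul, ← zpow_mul, ← zpow_add₀ h0]
  congr 1
  push_cast
  ring

lemma zz_sub (p : ℕ) (hp : 2 ≤ p) (s : ℕ) (hs : s ≤ p) : zz p ((p - s : ℕ) : ℤ) = -zz p s := by
  unfold zz
  rw [Nat.cast_sub hs, neg_sub]
  have h1 := neg_q p hp (s : ℤ)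
  have h2 := neg_q p hp ((p : ℤ) - s)
  rw [show (p : ℤ) - s - p = -(s : ℤ) by ring] at h2
  rw [← h1, ← h2]
  ring

lemma cc_sub (p : ℕ) (hp : 2 ≤ p) (s : ℕ) (hs : s ≤ p) : -1 * cc p ((p - s : ℕ) : ℤ) = cc p s := by
  unfold cc
  rw [zz_sub p hp s hs]; ring

lemma G_C (p : ℕ) (hp : 2 ≤ p)
    (ρP : (α : ℂ) → (s : ℕ) → (Uq p →ₐ[ℂ] Matrix (PIdx p s) (PIdx p s) ℂ))
    (hP : IsPRep p ρP) (s : ℕ) (h1 : 1 ≤ s) (hs : s ≤ p - 1) (n j : ℕ) :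
    GOf p ρP s (CC p ^ n * KK p ^ j) = n * cc p s ^ (n - 1) * ww p j s := by
  rw [GOf_apply, ← ww_split p hp j s (by omega), mul_add, Finset.sum_range, Finset.sum_range,
    Finset.mul_sum, Finset.mul_sum]
  obtain ⟨a1, a2, a3⟩ := hP 1 (Or.inl rfl) s h1 hs
  obtain ⟨b1, b2, b3⟩ := hP (-1) (Or.inr rfl) (p - s) (by omega) (by omega)
  congr 1
  · refine Finset.sum_congr rfl fun i _ => ?_
    rw [P_H p hp (Or.inl rfl) s hs _ a1 a2 a3, one_mul (cc p s)]
  · refine Finset.sum_congr rfl fun i _ => ?_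
    rw [P_H p hp (Or.inr rfl) (p - s) (by omega) _ b1 b2 b3, cc_sub p hp s (by omega)]

lemma expansion_C (p : ℕ) (hp : 2 ≤ p)
    (ρX : (α : ℂ) → (s : ℕ) → (Uq p →ₐ[ℂ] Matrix (Fin s) (Fin s) ℂ))
    (hX : IsXRep p ρX)
    (ρP : (α : ℂ) → (s : ℕ) → (Uq p →ₐ[ℂ] Matrix (PIdx p s) (PIdx p s) ℂ))
    (hP : IsPRep p ρP) (n j : ℕ) :
    (-1 : ℂ) ^ (p - 1) * chiOf p (ρX 1 p) (CC p ^ n * KK p ^ j)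
      + chiOf p (ρX (-1) p) (CC p ^ n * KK p ^ j) +
          ∑ s ∈ Finset.Icc 1 (p - 1),
            ((-1 : ℂ) ^ s * (q p ^ (s : ℤ) + q p ^ (-(s : ℤ)))
                  * chiOf p (ρX 1 s) (CC p ^ n * KK p ^ j)
              + (-1 : ℂ) ^ (p - s - 1) * (q p ^ (s : ℤ) + q p ^ (-(s : ℤ)))
                  * chiOf p (ρX (-1) s) (CC p ^ n * KK p ^ j)
              + (-1 : ℂ) ^ s * (qi p s) ^ 2 * GOf p ρP s (CC p ^ n * KK p ^ j))
    = (-1 : ℂ) ^ (p - 1) * cc p p ^ n * ww p j p + cc p 0 ^ n * ww p j 0 +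
      ∑ s ∈ Finset.Icc 1 (p - 1), (-1 : ℂ) ^ s *
        (zz p s * cc p s ^ n + qi p s ^ 2 * (n * cc p s ^ (n - 1))) * ww p j s := by
  have hχ : ∀ α : ℂ, (α = 1 ∨ α = -1) → ∀ s : ℕ, 1 ≤ s → s ≤ p →
      chiOf p (ρX α s) (CC p ^ n * KK p ^ j) = (α * cc p s) ^ n *
        ∑ i ∈ Finset.range s, (α * q p ^ ((s : ℤ) - 1 - 2 * (i : ℕ))) ^ j := by
    intro α hα s h1 h2
    obtain ⟨a, b, c⟩ := hX α hα s h1 h2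
    exact X_chi p hp hα s _ a b c n j
  have hp1 : chiOf p (ρX 1 p) (CC p ^ n * KK p ^ j) = cc p p ^ n * ww p j p := by
    rw [hχ 1 (Or.inl rfl) p (by omega) le_rfl, ← ww_split p hp j p le_rfl]
    simp
  have hm1 : chiOf p (ρX (-1) p) (CC p ^ n * KK p ^ j) = cc p 0 ^ n * ww p j 0 := by
    rw [hχ (-1) (Or.inr rfl) p (by omega) le_rfl, ← ww_split p hp j 0 (by omega)]
    have := cc_sub p hp 0 (by omega)
    simp only [Nat.sub_zero, Nat.cast_zero] at this
    rw [this]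
    simp
  have hrefl : ∑ s ∈ Finset.Icc 1 (p - 1), (-1 : ℂ) ^ (p - s - 1) * zz p s
                  * chiOf p (ρX (-1) s) (CC p ^ n * KK p ^ j)
      = ∑ s ∈ Finset.Icc 1 (p - 1), (-1 : ℂ) ^ s * zz p s
                  * chiOf p (ρX (-1) (p - s)) (CC p ^ n * KK p ^ j) := by
    refine Finset.sum_nbij' (fun s => p - s) (fun s => p - s) ?_ ?_ ?_ ?_ ?_
    · intro a ha; simp at ha ⊢; omega
    · intro a ha; simp at ha ⊢; omega
    · intro a ha; simp at ha ⊢; omega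
    · intro a ha; simp at ha ⊢; omega
    · intro a ha
      simp only [Finset.mem_Icc] at ha
      have e : p - (p - a) = a := by omega
      rw [e, zz_sub p hp a (by omega)]
      obtain ⟨b, hb⟩ : ∃ b, p - a = b + 1 := ⟨p - a - 1, by omega⟩
      rw [hb, Nat.add_sub_cancel, pow_succ]
      ring
  rw [hp1, hm1]
  simp only [Finset.sum_add_distrib]
  have hz : ∀ s : ℕ, q p ^ (s : ℤ) + q p ^ (-(s : ℤ)) = zz p s := fun s => rfl
  simp only [hz]
  rw [hrefl, ← Finset.sum_add_distrib, ← Finset.sum_add_distrib]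
  congr 1
  · ring
  · refine Finset.sum_congr rfl fun s hs => ?_
    rw [Finset.mem_Icc] at hs
    rw [G_C p hp ρP hP s hs.1 hs.2, hχ 1 (Or.inl rfl) s hs.1 (by omega),
      hχ (-1) (Or.inr rfl) (p - s) (by omega) (by omega), cc_sub p hp s (by omega),
      ← ww_split p hp j s (by omega), one_mul (cc p s)]
    ring

lemma scalar_final (p : ℕ) (hp : 2 ≤ p) (n j : ℕ) (hn : n ≤ p - 1) :
    (-1 : ℂ) ^ (p - 1) * cc p p ^ n * ww p j p + cc p 0 ^ n * ww p j 0 +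
      ∑ s ∈ Finset.Icc 1 (p - 1), (-1 : ℂ) ^ s *
        (zz p s * cc p s ^ n + qi p s ^ 2 * (n * cc p s ^ (n - 1))) * ww p j s
    = if n = p - 1 ∧ 2 * p ∣ j then (-1 : ℂ) ^ (p - 1) * (2 * (p : ℂ)) * (qfact p (p - 1)) ^ 2
        else 0 := by
  by_cases hj : p ∣ j
  · obtain ⟨k, rfl⟩ := hj
    have hw : ∀ s : ℕ, ww p (p * k) s = ((-1) ^ k * (-1) ^ (k * s)) * p := by
      intro s
      rw [ww_eq p hp, if_pos (dvd_mul_right p k)]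
      congr 1
      have : ((s : ℤ) - 1) * ((p * k : ℕ) : ℤ) = (p : ℤ) * ((k + k * s : ℕ) : ℤ) + 2 * p * (-k) := by
        push_cast; ring
      rw [this, q_zpow_add_period p hp, q_p_mul p hp, pow_add]
    have hpp : (-1 : ℂ) ^ p = - (-1) ^ (p - 1) := by
      obtain ⟨b, hb⟩ : ∃ b, p = b + 1 := ⟨p - 1, by omega⟩
      rw [hb, Nat.add_sub_cancel, pow_succ]; ring
    rcases Nat.even_or_odd k with hk | hk
    · have hw' : ∀ s : ℕ, ww p (p * k) s = p := by
        intro s; rw [hw, hk.neg_one_pow, (hk.mul_right s).neg_one_pow]; ring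
      simp only [hw']
      have hd : 2 * p ∣ p * k := by
        obtain ⟨t, rfl⟩ := hk
        exact ⟨t, by ring⟩
      have h := full_sum_p p hp n hn
      rw [hpp] at h
      simp only [hd, and_true]
      have h' : (if n = p - 1 then (-1 : ℂ) ^ (p - 1) * (2 * (p : ℂ)) * (qfact p (p - 1)) ^ 2 else 0)
          = (p : ℂ) * (if n = p - 1 then (-1 : ℂ) ^ (p - 1) * 2 * qfact p (p - 1) ^ 2 else 0) := by
        split_ifs <;> ring
      rw [h', ← h, ← Finset.sum_mul]
      ring
    · have hw' : ∀ s : ℕ, ww p (p * k) s = -(-1) ^ s * p := by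
        intro s; rw [hw, pow_mul, hk.neg_one_pow]; ring
      have hd : ¬ 2 * p ∣ p * k := by
        rintro ⟨t, ht⟩
        have : k = 2 * t := Nat.eq_of_mul_eq_mul_left (by omega : 0 < p) (by linarith)
        rw [this] at hk
        exact (Nat.not_odd_iff_even.2 (even_two_mul t)) hk
      have h := full_sum_zero p hp n hn
      rw [if_neg (fun hh => hd hh.2)]
      have hsq : ∀ s : ℕ, ((-1 : ℂ) ^ s) * (-1) ^ s = 1 := by
        intro s; rw [← mul_pow]; norm_num
      have e : ∀ s : ℕ, (-1 : ℂ) ^ s *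
        (zz p s * cc p s ^ n + qi p s ^ 2 * (n * cc p s ^ (n - 1))) * ww p (p * k) s
          = (zz p s * cc p s ^ n + qi p s ^ 2 * (n * cc p s ^ (n - 1))) * (-p) := by
        intro s
        rw [hw']
        linear_combination (-(p : ℂ) * (zz p s * cc p s ^ n + qi p s ^ 2 * (n * cc p s ^ (n - 1))))
          * hsq s
      simp only [e]
      rw [← Finset.sum_mul, hw', hw', hpp]
      have h9 := hsq (p - 1)
      linear_combination (-(p : ℂ)) * h + (p : ℂ) * cc p p ^ n * h9
  · have hw : ∀ s : ℕ, ww p j s = 0 := by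
      intro s; rw [ww_eq p hp, if_neg hj, mul_zero]
    have hd : ¬ (n = p - 1 ∧ 2 * p ∣ j) := fun h => hj (dvd_trans (dvd_mul_left p 2) h.2)
    simp [hw, hd]


/-- the symmetric linear form `μ(K^{p+1}·)`, where `μ` is the right
integral normalized by `ζ = (-1)^{p-1} 2p ([p-1]!)²`, has the given expansion in the GTA
basis. -/
theorem statement_12 (p : ℕ) (hp : 2 ≤ p)
    (ρX : (α : ℂ) → (s : ℕ) → (Uq p →ₐ[ℂ] Matrix (Fin s) (Fin s) ℂ))
    (hX : IsXRep p ρX)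
    (ρP : (α : ℂ) → (s : ℕ) → (Uq p →ₐ[ℂ] Matrix (PIdx p s) (PIdx p s) ℂ))
    (hP : IsPRep p ρP)
    (Δ : Uq p →ₐ[ℂ] (Uq p ⊗[ℂ] Uq p)) (hΔ : IsCoprod p Δ)
    (μ : Uq p →ₗ[ℂ] ℂ)
    (hμ : ∀ m n j : ℕ, m ≤ p - 1 → n ≤ p - 1 → j ≤ 2 * p - 1 →
      μ (FF p ^ m * EE p ^ n * KK p ^ j) =
        if m = p - 1 ∧ n = p - 1 ∧ j = p + 1 then
          (-1 : ℂ) ^ (p - 1) * (2 * (p : ℂ)) * (qfact p (p - 1)) ^ 2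
        else 0) :
    -- `μ` is a right integral: `(μ ⊗ Id)(Δ(x)) = μ(x) 1`
    (∀ x : Uq p,
      (TensorProduct.lid ℂ (Uq p)) ((TensorProduct.map μ LinearMap.id) (Δ x)) = μ x • 1)
    -- expansion of `μ(K^{p+1}·)` in the GTA basis
    ∧ ∀ u : Uq p,
        μ (KK p ^ (p + 1) * u) =
          (-1 : ℂ) ^ (p - 1) * chiOf p (ρX 1 p) u + chiOf p (ρX (-1) p) u +
          ∑ s ∈ Finset.Icc 1 (p - 1),
            ((-1 : ℂ) ^ s * (q p ^ (s : ℤ) + q p ^ (-(s : ℤ))) * chiOf p (ρX 1 s) u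
              + (-1 : ℂ) ^ (p - s - 1) * (q p ^ (s : ℤ) + q p ^ (-(s : ℤ)))
                  * chiOf p (ρX (-1) s) u
              + (-1 : ℂ) ^ s * (qi p s) ^ 2 * GOf p ρP s u) := by
  have hμ' := mu_mon p hp μ _ hμ
  refine ⟨fun x => integral p hp Δ hΔ μ _ hμ' x, ?_⟩
  intro u
  set R : Uq p →ₗ[ℂ] ℂ := (-1 : ℂ) ^ (p - 1) • chiOf p (ρX 1 p) + chiOf p (ρX (-1) p) +
          ∑ s ∈ Finset.Icc 1 (p - 1),
            (((-1 : ℂ) ^ s * (q p ^ (s : ℤ) + q p ^ (-(s : ℤ)))) • chiOf p (ρX 1 s)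
              + ((-1 : ℂ) ^ (p - s - 1) * (q p ^ (s : ℤ) + q p ^ (-(s : ℤ))))
                  • chiOf p (ρX (-1) s)
              + ((-1 : ℂ) ^ s * (qi p s) ^ 2) • GOf p ρP s) with hR
  have hRa : ∀ v, R v = (-1 : ℂ) ^ (p - 1) * chiOf p (ρX 1 p) v + chiOf p (ρX (-1) p) v +
          ∑ s ∈ Finset.Icc 1 (p - 1),
            ((-1 : ℂ) ^ s * (q p ^ (s : ℤ) + q p ^ (-(s : ℤ))) * chiOf p (ρX 1 s) v
              + (-1 : ℂ) ^ (p - s - 1) * (q p ^ (s : ℤ) + q p ^ (-(s : ℤ)))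
                  * chiOf p (ρX (-1) s) v
              + (-1 : ℂ) ^ s * (qi p s) ^ 2 * GOf p ρP s v) := by
    intro v
    simp only [hR, LinearMap.add_apply, LinearMap.smul_apply, LinearMap.sum_apply, smul_eq_mul]
  have hmain : μ.comp (LinearMap.mulLeft ℂ (KK p ^ (p + 1))) = R := by
    apply cas_ext p hp
    · intro m n j hm hn hmn
      rw [LinearMap.comp_apply, LinearMap.mulLeft_apply, mu_off p μ _ hμ' m n j hm hn hmn, hRa]
      have hχ : ∀ α : ℂ, (α = 1 ∨ α = -1) → ∀ s : ℕ, 1 ≤ s → s ≤ p →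
          chiOf p (ρX α s) (mon p m n j) = 0 := fun α hα s h1 h2 =>
        X_off p hp hα s _ (hX α hα s h1 h2).1 m n j hm hn hmn
      rw [hχ 1 (Or.inl rfl) p (by omega) le_rfl, hχ (-1) (Or.inr rfl) p (by omega) le_rfl,
        Finset.sum_eq_zero]
      · simp
      · intro s hs
        rw [Finset.mem_Icc] at hs
        rw [hχ 1 (Or.inl rfl) s hs.1 (by omega), hχ (-1) (Or.inr rfl) s hs.1 (by omega), GOf_apply,
          Finset.sum_eq_zero, Finset.sum_eq_zero]
        · simp
        · intro i _
          exact P_off p hp (Or.inr rfl) (p - s) _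
            (hP (-1) (Or.inr rfl) (p - s) (by omega) (by omega)).1 m n j hm hn hmn i
        · intro i _
          exact P_off p hp (Or.inl rfl) s _ (hP 1 (Or.inl rfl) s hs.1 hs.2).1 m n j hm hn hmn i
    · intro n j hn
      rw [LinearMap.comp_apply, LinearMap.mulLeft_apply, mu_C p hp μ _ hμ' n j hn, hRa,
        expansion_C p hp ρX hX ρP hP, scalar_final p hp n j hn]
  rw [← hRa, ← hmain]
  rfl

end Uqsl2
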